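/- arXiv:2105.08860 — 2 statements merged into one kernel-verified Lean document; each statement's English description precedes it below -/
import Mathlib

section
/- Let s > 7 be a square-free integer not divisible by 7 and let K = ℚ(√7, √s). Then the Pythagoras number of O_K is at least 5. In particular, if s ≠ 11, the element α = 11 + 2√7 + w² has length exactly 5, where w = (1+√s)/2 if s ≡ 1 (mod 4), w = 1+√s if s ≡ 2 (mod 4), and w = (√7+√s)/2 if s ≡ 3 (mod 4); for s = 11 the element 3 + ((√7+√11)/2)² + (1+(√7+√11)/2)² has length exactly 5. -/
/-!
The number `α` is visibly a sum of five squares; the point is that four do not suffice.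

Twice an integer of `ℚ(√7, √s)` has the form `A + B√7 + C√s + D√7√s` with `A, B, C, D ∈ ℤ`, subject
to parity conditions that depend on `s` modulo `4` (`exists_int_rep`, `parity_one`, `parity_two`,
`parity_three`). This is obtained from traces and norms to the three quadratic subfields; the
conjugates come from the four real embeddings of `ℚ[X, Y]/(X² - 7, Y² - s)`, the one defined by
the positive square roots being injective by linear independence of `1, √7, √s, √7√s` (`indep`).

Comparing coefficients, four squares with sum `α` yield four equations over `ℤ` (`exists_coords`).
The first, which is the trace, is a positive definite form: it forces all `D` to vanish (for
`s = 10` a second equation is needed), and, together with a congruence modulo `4`, it forces exactly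
one `C` to be nonzero, unless `s = 11`. The corresponding square is then `w²`, and the other three
squares have sum `11 + 2√7` in `ℤ[√7]`, which is impossible (`not_three_squares`). For `s = 11` the
same equations for the other element are contradictory modulo `4` (`no_rep_eleven`).
-/

/-- The totally real biquadratic field `ℚ(√p, √q)` as a subfield of `ℝ`. -/
noncomputable def biqField (p q : ℕ) : IntermediateField ℚ ℝ :=
  IntermediateField.adjoin ℚ {Real.sqrt p, Real.sqrt q}

/-- The ring of integers of a subfield `K` of `ℝ`, viewed as the set of elements
of `K` that are integral over `ℤ`. -/
def ringOfInt (K : IntermediateField ℚ ℝ) : Set ℝ :=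
  {x : ℝ | x ∈ K ∧ IsIntegral ℤ x}

/-- `α` is a sum of `n` squares of elements of `S`. -/
def SumOfNSquaresIn (S : Set ℝ) (n : ℕ) (α : ℝ) : Prop :=
  ∃ x : Fin n → ℝ, (∀ i, x i ∈ S) ∧ α = ∑ i, x i ^ 2

/-- `α` is a sum of squares of elements of `S`. -/
def IsSumOfSquaresIn (S : Set ℝ) (α : ℝ) : Prop := ∃ n, SumOfNSquaresIn S n α

/-- `K` is a totally real biquadratic field. -/
def IsBiquadratic (K : IntermediateField ℚ ℝ) : Prop :=
  ∃ p q : ℕ, Squarefree p ∧ Squarefree q ∧ 1 < p ∧ 1 < q ∧ p ≠ q ∧ K = biqField p q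

/-! ### Squarefree integers and rational numbers -/

lemma not_isSquare_of_squarefree {n : ℕ} (hn : Squarefree n) (h1 : 1 < n) : ¬ IsSquare n := by
  rintro ⟨k, rfl⟩
  have := hn k dvd_rfl
  rw [Nat.isUnit_iff] at this
  subst this
  omega

lemma eq_zero_of_sq_eq_mul_sq {n : ℕ} (hn : ¬ IsSquare n) {a b : ℚ} (h : a ^ 2 = n * b ^ 2) :
    a = 0 ∧ b = 0 := by
  have hb : b = 0 := by
    by_contra hb
    apply hn
    rw [← Rat.isSquare_natCast_iff]
    exact ⟨a / b, by field_simp; linarith⟩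
  subst hb
  exact ⟨by simpa using h, rfl⟩

/-- If `n` is squarefree and `n q²` is an integer, then so is the rational number `q`. -/
lemma int_of_squarefree_mul_sq {n : ℕ} (hn : Squarefree n) {q : ℚ} {k : ℤ}
    (h : n * q ^ 2 = k) : ∃ m : ℤ, q = m := by
  have hn0 : (n : ℚ) ≠ 0 := by exact_mod_cast hn.ne_zero
  have hint : IsIntegral ℤ ((n : ℚ) * q) := by
    refine IsIntegral.of_pow (n := 2) (by norm_num) ?_
    have : ((n : ℚ) * q) ^ 2 = ((n * k : ℤ) : ℚ) := by push_cast; rw [← h]; ring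
    rw [this]
    exact isIntegral_algebraMap (R := ℤ) (A := ℚ)
  obtain ⟨m, hm⟩ := IsIntegrallyClosed.isIntegral_iff.mp hint
  have hm' : (m : ℚ) = n * q := by simpa using hm
  have hdvd : (n : ℤ) ∣ m ^ 2 := by
    refine ⟨k, ?_⟩
    have : (m : ℚ) ^ 2 = n * k := by rw [hm', ← h]; ring
    exact_mod_cast this
  have hsq : Squarefree (n : ℤ) := Int.squarefree_natCast.mpr hn
  obtain ⟨l, hl⟩ := (hsq.dvd_pow_iff_dvd two_ne_zero).mp hdvd
  refine ⟨l, mul_left_cancel₀ hn0 ?_⟩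
  rw [← hm', hl]; push_cast; ring

lemma isIntegral_of_eq {x y : ℝ} (h : IsIntegral ℤ x) (e : y = x) : IsIntegral ℤ y := e ▸ h

lemma int_of_isIntegral {q : ℚ} (h : IsIntegral ℤ (q : ℝ)) : ∃ m : ℤ, q = m := by
  have h' : IsIntegral ℤ q := by
    have := (isIntegral_algHom_iff (algebraMap ℚ ℝ).toIntAlgHom
      (algebraMap ℚ ℝ).injective (x := q))
    exact this.mp (by simpa using h)
  obtain ⟨m, hm⟩ := IsIntegrallyClosed.isIntegral_iff.mp h'
  exact ⟨m, by simpa using hm.symm⟩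

/-- The ring of integers of `ℚ(√7)` is `ℤ[√7]`; integrality of both conjugates is assumed. -/
lemma int_sqrt_seven {m n : ℚ} (h1 : IsIntegral ℤ ((m : ℝ) + n * √7))
    (h2 : IsIntegral ℤ ((m : ℝ) - n * √7)) : (∃ k : ℤ, m = k) ∧ ∃ k : ℤ, n = k := by
  have h7 : √7 ^ 2 = (7 : ℝ) := Real.sq_sqrt (by norm_num)
  obtain ⟨M, hM⟩ : ∃ M : ℤ, 2 * m = M := by
    apply int_of_isIntegral
    refine isIntegral_of_eq (h1.add h2) ?_
    push_cast; ring
  obtain ⟨N, hN⟩ : ∃ N : ℤ, m ^ 2 - 7 * n ^ 2 = N := by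
    apply int_of_isIntegral
    refine isIntegral_of_eq (h1.mul h2) ?_
    push_cast; linear_combination (n : ℝ) ^ 2 * h7
  obtain ⟨P, hP⟩ : ∃ P : ℤ, 2 * n = P := by
    refine int_of_squarefree_mul_sq (n := 7) (k := M ^ 2 - 4 * N)
      (show Nat.Prime 7 by norm_num).squarefree ?_
    push_cast
    rw [← hM, ← hN]; ring
  have hZ : M ^ 2 - 7 * P ^ 2 = 4 * N := by
    have : (M : ℚ) ^ 2 - 7 * P ^ 2 = 4 * N := by rw [← hM, ← hN, ← hP]; ring
    exact_mod_cast this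
  have hME : Even M ∧ Even P := by
    rcases Int.even_or_odd' M with ⟨u, rfl | rfl⟩ <;>
      rcases Int.even_or_odd' P with ⟨v, rfl | rfl⟩ <;>
      ring_nf at hZ <;> first | omega | exact ⟨by simp, by simp⟩
  obtain ⟨⟨u, hu⟩, ⟨v, hv⟩⟩ := hME
  refine ⟨⟨u, ?_⟩, ⟨v, ?_⟩⟩
  · rw [hu] at hM; push_cast at hM; linarith
  · rw [hv] at hP; push_cast at hP; linarith

/-! ### The field `ℚ(√7, √s)` -/

/-- The squarefreeness facts about `s` in use: `s` and `7s` are squarefree and not squares. -/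
structure Good (s : ℕ) : Prop where
  sf : Squarefree s
  sf7 : Squarefree (7 * s)
  ns : ¬ IsSquare s
  ns7 : ¬ IsSquare (7 * s)

lemma Good.mk' {s : ℕ} (hs : Squarefree s) (hs7 : 7 < s) (hnd : ¬ (7 ∣ s)) : Good s := by
  have h7 : Nat.Prime 7 := by norm_num
  have hsf : Squarefree (7 * s) := by
    rw [Nat.squarefree_mul ((Nat.Prime.coprime_iff_not_dvd h7).mpr hnd)]
    exact ⟨h7.squarefree, hs⟩
  exact ⟨hs, hsf, not_isSquare_of_squarefree hs (by omega),
    not_isSquare_of_squarefree hsf (by omega)⟩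

lemma indep_seven {a b : ℚ} (h : (a : ℝ) + b * √7 = 0) : a = 0 ∧ b = 0 := by
  have h7 : √7 ^ 2 = (7 : ℝ) := Real.sq_sqrt (by norm_num)
  apply eq_zero_of_sq_eq_mul_sq (n := 7)
    (not_isSquare_of_squarefree (show Nat.Prime 7 by norm_num).squarefree (by norm_num))
  have : (a : ℝ) ^ 2 = 7 * b ^ 2 := by linear_combination (a - b * √7) * h + (b : ℝ) ^ 2 * h7
  exact_mod_cast this

/-- Linear independence of `1, √7, √s, √7√s` over `ℚ`. Squaring `a + b√7 = -(c + d√7)√s` gives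
`a² + 7b² = s(c² + 7d²)` and `ab = scd`, whence `a² - 7b² = ±s(c² - 7d²)`. -/
lemma indep {s : ℕ} (g : Good s) {a b c d : ℚ}
    (h : (a : ℝ) + b * √7 + c * √s + d * (√7 * √s) = 0) :
    a = 0 ∧ b = 0 ∧ c = 0 ∧ d = 0 := by
  have h7 : √7 ^ 2 = (7 : ℝ) := Real.sq_sqrt (by norm_num)
  have hs : √(s : ℝ) ^ 2 = s := Real.sq_sqrt (by positivity)
  have key := indep_seven (a := a ^ 2 + 7 * b ^ 2 - s * (c ^ 2 + 7 * d ^ 2))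
    (b := 2 * (a * b - s * (c * d))) (by
      push_cast
      linear_combination ((a : ℝ) + b * √7 - (c + d * √7) * √s) * h
        + (-(b : ℝ) ^ 2 + s * d ^ 2) * h7 + ((c : ℝ) + d * √7) ^ 2 * hs)
  obtain ⟨k1, k2⟩ := key
  have hprod : (a ^ 2 - 7 * b ^ 2 - s * (c ^ 2 - 7 * d ^ 2)) *
      (a ^ 2 - 7 * b ^ 2 + s * (c ^ 2 - 7 * d ^ 2)) = 0 := by
    linear_combination (a ^ 2 + 7 * b ^ 2 + s * (c ^ 2 + 7 * d ^ 2)) * k1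
      - 14 * (a * b + s * (c * d)) * k2
  rcases mul_eq_zero.mp hprod with h0 | h0
  · obtain ⟨ha, hc⟩ := eq_zero_of_sq_eq_mul_sq g.ns (a := a) (b := c) (by linarith)
    obtain ⟨hb, hd⟩ := eq_zero_of_sq_eq_mul_sq g.ns (a := b) (b := d) (by linarith)
    exact ⟨ha, hb, hc, hd⟩
  · obtain ⟨ha, hd⟩ := eq_zero_of_sq_eq_mul_sq g.ns7 (a := a) (b := d) (by push_cast; linarith)
    obtain ⟨hb, hc⟩ := eq_zero_of_sq_eq_mul_sq g.ns7 (a := 7 * b) (b := c) (by push_cast; linarith)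
    exact ⟨ha, by linarith, hc, hd⟩

/-- The ring `ℚ[X, Y]/(X² - 7, Y² - s)`, an abstract copy of `ℚ(√7, √s)`. -/
abbrev BiqAlg (s : ℕ) : Type :=
  QuadraticAlgebra (QuadraticAlgebra ℚ 7 0) (s : QuadraticAlgebra ℚ 7 0) 0

/-- Evaluation at square roots `u` of `7` and `v` of `s`. The four choices of signs
give the four real embeddings. -/
def evalHom (s : ℕ) (u v : ℝ) (hu : u ^ 2 = 7) (hv : v ^ 2 = s) : BiqAlg s →+* ℝ where
  toFun z := z.re.re + z.re.im * u + z.im.re * v + z.im.im * (u * v)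
  map_zero' := by simp
  map_one' := by simp [QuadraticAlgebra.re_one, QuadraticAlgebra.im_one]
  map_add' x y := by simp; ring
  map_mul' x y := by
    simp [QuadraticAlgebra.re_mul, QuadraticAlgebra.im_mul, QuadraticAlgebra.re_natCast,
      QuadraticAlgebra.im_natCast]
    grind

lemma evalHom_apply (s : ℕ) (u v : ℝ) (hu : u ^ 2 = 7) (hv : v ^ 2 = s) (z : BiqAlg s) :
    evalHom s u v hu hv z = z.re.re + z.re.im * u + z.im.re * v + z.im.im * (u * v) := rfl

lemma evalHom_injective {s : ℕ} (g : Good s) (hu : √7 ^ 2 = (7 : ℝ)) (hv : √(s : ℝ) ^ 2 = s) :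
    Function.Injective (evalHom s √7 √s hu hv) := by
  rw [injective_iff_map_eq_zero]
  intro z hz
  rw [evalHom_apply] at hz
  obtain ⟨h1, h2, h3, h4⟩ := indep g hz
  ext <;> assumption

lemma exists_rat_rep {s : ℕ} {x : ℝ} (hu : √7 ^ 2 = (7 : ℝ)) (hv : √(s : ℝ) ^ 2 = s)
    (hx : x ∈ biqField 7 s) : ∃ z : BiqAlg s, evalHom s √7 √s hu hv z = x := by
  have hx' : x ∈ Algebra.adjoin ℚ ({√(7 : ℕ), √(s : ℝ)} : Set ℝ) := by
    have halg : ∀ y ∈ ({√(7 : ℕ), √(s : ℝ)} : Set ℝ), IsAlgebraic ℚ y := by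
      intro y hy
      have : IsIntegral ℤ y := by
        refine IsIntegral.of_pow (n := 2) (by norm_num) ?_
        rcases hy with rfl | rfl
        · rw [Real.sq_sqrt (by positivity)]; exact isIntegral_algebraMap (R := ℤ) (x := 7)
        · rw [hv]; exact_mod_cast isIntegral_algebraMap (R := ℤ) (A := ℝ) (x := s)
      exact (this.tower_top (A := ℚ)).isAlgebraic
    rw [← IntermediateField.adjoin_toSubalgebra_of_isAlgebraic halg]
    exact hx
  have hle : Algebra.adjoin ℚ ({√(7 : ℕ), √(s : ℝ)} : Set ℝ) ≤
      (evalHom s √7 √s hu hv).toRatAlgHom.range := by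
    refine Algebra.adjoin_le ?_
    rintro y (rfl | rfl)
    · exact ⟨⟨⟨0, 1⟩, ⟨0, 0⟩⟩, by simp [evalHom_apply]⟩
    · exact ⟨⟨⟨0, 0⟩, ⟨1, 0⟩⟩, by simp [evalHom_apply]⟩
  exact hle hx'

/-- The shape of the integers of `ℚ(√7, √s)`: twice such an integer has integral coordinates,
and these satisfy two congruences, coming from the relative norm to `ℚ(√7)`. -/
lemma exists_int_rep {s : ℕ} (g : Good s) {x : ℝ} (hx : x ∈ ringOfInt (biqField 7 s)) :
    ∃ A B C D : ℤ, 2 * x = A + B * √7 + C * √s + D * (√7 * √s) ∧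
      4 ∣ A ^ 2 + 7 * B ^ 2 - s * C ^ 2 - 7 * s * D ^ 2 ∧ 2 ∣ A * B - s * (C * D) := by
  have hu : √7 ^ 2 = (7 : ℝ) := Real.sq_sqrt (by norm_num)
  have hv : √(s : ℝ) ^ 2 = s := Real.sq_sqrt (by positivity)
  obtain ⟨hxK, hint⟩ := hx
  obtain ⟨z, rfl⟩ := exists_rat_rep hu hv hxK
  have hz : IsIntegral ℤ z :=
    (isIntegral_algHom_iff (evalHom s √7 √s hu hv).toIntAlgHom
      (evalHom_injective g hu hv)).mp hint
  -- All four conjugates are integral.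
  have hc : ∀ u v (hu : u ^ 2 = 7) (hv : v ^ 2 = (s : ℝ)),
      IsIntegral ℤ ((z.re.re : ℝ) + z.re.im * u + z.im.re * v + z.im.im * (u * v)) :=
    fun u v hu hv => hz.map (evalHom s u v hu hv).toIntAlgHom
  rw [evalHom_apply]
  generalize z.re.re = a at *
  generalize z.re.im = b at *
  generalize z.im.re = c at *
  generalize z.im.im = d at *
  have h1 := hc √7 √s hu hv
  have h2 := hc √7 (-√s) hu (by rw [neg_sq, hv])
  have h3 := hc (-√7) √s (by rw [neg_sq, hu]) hv
  have h4 := hc (-√7) (-√s) (by rw [neg_sq, hu]) (by rw [neg_sq, hv])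
  obtain ⟨⟨A, hA⟩, ⟨B, hB⟩⟩ := int_sqrt_seven (m := 2 * a) (n := 2 * b)
    (by refine isIntegral_of_eq (h1.add h2) ?_; push_cast; ring)
    (by refine isIntegral_of_eq (h3.add h4) ?_; push_cast; ring)
  obtain ⟨N, hN⟩ : ∃ N : ℤ, (2 * a) ^ 2 - s * (2 * c) ^ 2 = N := by
    apply int_of_isIntegral
    refine isIntegral_of_eq ((h1.add h3).mul (h2.add h4)) ?_
    push_cast; linear_combination (2 * c : ℝ) ^ 2 * hv
  obtain ⟨C, hC⟩ : ∃ C : ℤ, 2 * c = C :=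
    int_of_squarefree_mul_sq g.sf (k := A ^ 2 - N) (by push_cast; rw [← hN, ← hA]; ring)
  obtain ⟨P, hP⟩ : ∃ P : ℤ, (2 * a) ^ 2 - (7 * s) * (2 * d) ^ 2 = P := by
    apply int_of_isIntegral
    refine isIntegral_of_eq ((h1.add h4).mul (h2.add h3)) ?_
    push_cast
    linear_combination (2 * d : ℝ) ^ 2 * (√s ^ 2 * hu + 7 * hv)
  obtain ⟨D, hD⟩ : ∃ D : ℤ, 2 * d = D :=
    int_of_squarefree_mul_sq g.sf7 (k := A ^ 2 - P) (by push_cast; rw [← hP, ← hA]; ring)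
  obtain ⟨⟨M, hM⟩, ⟨Q, hQ⟩⟩ := int_sqrt_seven
    (m := a ^ 2 + 7 * b ^ 2 - s * c ^ 2 - 7 * s * d ^ 2) (n := 2 * (a * b - s * (c * d)))
    (by
      refine isIntegral_of_eq (h1.mul h2) ?_; push_cast
      linear_combination ((c : ℝ) + d * √7) ^ 2 * hv + (-(b : ℝ) ^ 2 + s * d ^ 2) * hu)
    (by
      refine isIntegral_of_eq (h3.mul h4) ?_; push_cast
      linear_combination ((c : ℝ) - d * √7) ^ 2 * hv + (-(b : ℝ) ^ 2 + s * d ^ 2) * hu)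
  refine ⟨A, B, C, D, ?_, ⟨M, ?_⟩, ⟨Q, ?_⟩⟩
  · have hA' : (2 * a : ℝ) = A := by exact_mod_cast hA
    have hB' : (2 * b : ℝ) = B := by exact_mod_cast hB
    have hC' : (2 * c : ℝ) = C := by exact_mod_cast hC
    have hD' : (2 * d : ℝ) = D := by exact_mod_cast hD
    rw [← hA', ← hB', ← hC', ← hD']; ring
  · have : (A : ℚ) ^ 2 + 7 * B ^ 2 - s * C ^ 2 - 7 * s * D ^ 2 = 4 * M := by
      rw [← hA, ← hB, ← hC, ← hD, ← hM]; ring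
    exact_mod_cast this
  · have : (A : ℚ) * B - s * (C * D) = 2 * Q := by
      rw [← hA, ← hB, ← hC, ← hD, ← hQ]; ring
    exact_mod_cast this

/-! ### Integer arithmetic of the coordinates -/

lemma dvd_two_of_zmod {x : ℤ} (h : (2 : ZMod 4) * x = 0) : 2 ∣ x := by
  have : ((2 * x : ℤ) : ZMod 4) = 0 := by push_cast; exact h
  rw [ZMod.intCast_zmod_eq_zero_iff_dvd] at this
  omega

lemma zmod_of_dvd {s : ℕ} {A B C D : ℤ} (h1 : 4 ∣ A ^ 2 + 7 * B ^ 2 - s * C ^ 2 - 7 * s * D ^ 2)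
    (h2 : 2 ∣ A * B - s * (C * D)) :
    (A : ZMod 4) ^ 2 + 7 * B ^ 2 - s * C ^ 2 - 7 * s * D ^ 2 = 0 ∧
      (2 : ZMod 4) * (A * B - s * (C * D)) = 0 := by
  have e1 := (ZMod.intCast_zmod_eq_zero_iff_dvd _ 4).mpr h1
  have e2 := (ZMod.intCast_zmod_eq_zero_iff_dvd (2 * (A * B - s * (C * D))) 4).mpr
    (by push_cast; omega)
  push_cast at e1 e2
  exact ⟨e1, e2⟩

lemma parity_one {s : ℕ} (hs : s % 4 = 1) {A B C D : ℤ}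
    (h1 : 4 ∣ A ^ 2 + 7 * B ^ 2 - s * C ^ 2 - 7 * s * D ^ 2)
    (h2 : 2 ∣ A * B - s * (C * D)) : 2 ∣ A - C ∧ 2 ∣ B - D := by
  obtain ⟨e1, e2⟩ := zmod_of_dvd h1 h2
  have hs' : (s : ZMod 4) = 1 := by rw [← ZMod.natCast_mod, hs]; rfl
  rw [hs'] at e1 e2
  have key : ∀ a b c d : ZMod 4, a ^ 2 + 7 * b ^ 2 - 1 * c ^ 2 - 7 * 1 * d ^ 2 = 0 →
      2 * (a * b - 1 * (c * d)) = 0 → 2 * (a - c) = 0 ∧ 2 * (b - d) = 0 := by decide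
  obtain ⟨f1, f2⟩ := key _ _ _ _ e1 e2
  exact ⟨dvd_two_of_zmod (by push_cast; exact f1), dvd_two_of_zmod (by push_cast; exact f2)⟩

lemma parity_two {s : ℕ} (hs : s % 4 = 2) {A B C D : ℤ}
    (h1 : 4 ∣ A ^ 2 + 7 * B ^ 2 - s * C ^ 2 - 7 * s * D ^ 2)
    (h2 : 2 ∣ A * B - s * (C * D)) : 2 ∣ A ∧ 2 ∣ B ∧ 2 ∣ C - D := by
  obtain ⟨e1, e2⟩ := zmod_of_dvd h1 h2
  have hs' : (s : ZMod 4) = 2 := by rw [← ZMod.natCast_mod, hs]; rfl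
  rw [hs'] at e1 e2
  have key : ∀ a b c d : ZMod 4, a ^ 2 + 7 * b ^ 2 - 2 * c ^ 2 - 7 * 2 * d ^ 2 = 0 →
      2 * (a * b - 2 * (c * d)) = 0 → 2 * a = 0 ∧ 2 * b = 0 ∧ 2 * (c - d) = 0 := by decide
  obtain ⟨f1, f2, f3⟩ := key _ _ _ _ e1 e2
  exact ⟨dvd_two_of_zmod f1, dvd_two_of_zmod f2, dvd_two_of_zmod (by push_cast; exact f3)⟩

lemma parity_three {s : ℕ} (hs : s % 4 = 3) {A B C D : ℤ}
    (h1 : 4 ∣ A ^ 2 + 7 * B ^ 2 - s * C ^ 2 - 7 * s * D ^ 2)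
    (h2 : 2 ∣ A * B - s * (C * D)) : 2 ∣ A - D ∧ 2 ∣ B - C := by
  obtain ⟨e1, e2⟩ := zmod_of_dvd h1 h2
  have hs' : (s : ZMod 4) = 3 := by rw [← ZMod.natCast_mod, hs]; rfl
  rw [hs'] at e1 e2
  have key : ∀ a b c d : ZMod 4, a ^ 2 + 7 * b ^ 2 - 3 * c ^ 2 - 7 * 3 * d ^ 2 = 0 →
      2 * (a * b - 3 * (c * d)) = 0 → 2 * (a - d) = 0 ∧ 2 * (b - c) = 0 := by decide
  obtain ⟨f1, f2⟩ := key _ _ _ _ e1 e2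
  exact ⟨dvd_two_of_zmod (by push_cast; exact f1), dvd_two_of_zmod (by push_cast; exact f2)⟩

lemma sum_sq_nonneg {n : ℕ} (f : Fin n → ℤ) : 0 ≤ ∑ i, f i ^ 2 :=
  Finset.sum_nonneg fun _ _ => sq_nonneg _

lemma eq_zero_of_sum_sq {n : ℕ} {f : Fin n → ℤ} (h : ∑ i, f i ^ 2 = 0) (i : Fin n) : f i = 0 := by
  rw [Finset.sum_eq_zero_iff_of_nonneg fun _ _ => sq_nonneg _] at h
  simpa using h i (Finset.mem_univ i)

/-- A nonzero scalar product forces both vectors to be nonzero. -/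
lemma one_le_sum_sq {n : ℕ} {f g : Fin n → ℤ} (h : ∑ i, f i * g i ≠ 0) :
    1 ≤ ∑ i, f i ^ 2 ∧ 1 ≤ ∑ i, g i ^ 2 := by
  constructor
  · by_contra! hlt
    have h0 := eq_zero_of_sum_sq (le_antisymm (by omega) (sum_sq_nonneg f))
    exact h (by simp [h0])
  · by_contra! hlt
    have h0 := eq_zero_of_sum_sq (le_antisymm (by omega) (sum_sq_nonneg g))
    exact h (by simp [h0])

lemma exists_of_sum_sq_eq_one {n : ℕ} {f : Fin (n + 1) → ℤ} (h : ∑ i, f i ^ 2 = 1) :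
    ∃ i, f i ^ 2 = 1 ∧ ∀ j, f (i.succAbove j) = 0 := by
  obtain ⟨i, hi⟩ : ∃ i, f i ≠ 0 := by
    by_contra! h0
    simp [h0] at h
  have hpos : 0 < f i ^ 2 := by positivity
  rw [Fin.sum_univ_succAbove _ i] at h
  have hr := sum_sq_nonneg fun j => f (i.succAbove j)
  exact ⟨i, by omega, eq_zero_of_sum_sq (f := fun j => f (i.succAbove j)) (by omega)⟩

lemma dvd_sq_sub_sq {x y : ℤ} (h : 2 ∣ x - y) : 4 ∣ x ^ 2 - y ^ 2 := by
  obtain ⟨k, hk⟩ := h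
  exact ⟨k * (k + y), by rw [show x = 2 * k + y by omega]; ring⟩

lemma dvd_sum_sq_sub {n : ℕ} {f g : Fin n → ℤ} (h : ∀ i, 2 ∣ f i - g i) :
    4 ∣ ∑ i, f i ^ 2 - ∑ i, g i ^ 2 := by
  rw [← Finset.sum_sub_distrib]
  exact Finset.dvd_sum fun i _ => dvd_sq_sub_sq (h i)

/-- The bound `∑ g i ^ 2 < 4` gives `|g i| ≤ 1`, so that `f i ≠ 0` whenever `g i ≠ 0`. -/
lemma sum_sq_le_of_parity {n : ℕ} {f g : Fin n → ℤ} (h : ∀ i, 2 ∣ f i - g i)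
    (hg : ∑ i, g i ^ 2 < 4) : ∑ i, g i ^ 2 ≤ ∑ i, f i ^ 2 := by
  refine Finset.sum_le_sum fun i _ => ?_
  have hi : g i ^ 2 < 4 := lt_of_le_of_lt
    (Finset.single_le_sum (f := fun i => g i ^ 2) (fun _ _ => sq_nonneg _) (Finset.mem_univ i)) hg
  have h1 : g i < 2 := by nlinarith
  have h2 : -2 < g i := by nlinarith
  have h3 := h i
  by_cases hf : f i = 0
  · have : g i = 0 := by omega
    rw [this, hf]
  · have : 0 < f i ^ 2 := by positivity
    have : g i ^ 2 ≤ 1 := by nlinarith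
    omega

lemma sq_mod_four (x : ℤ) : x ^ 2 % 4 = 0 ∧ x % 2 = 0 ∨ x ^ 2 % 4 = 1 ∧ x % 2 = 1 := by
  rcases Int.even_or_odd' x with ⟨k, rfl | rfl⟩
  · left; ring_nf; omega
  · right; ring_nf; omega

lemma sq_add_sq_mod_four (x y : ℤ) : (x ^ 2 + y ^ 2) % 4 ≠ 3 := by
  rcases sq_mod_four x with h | h <;> rcases sq_mod_four y with h' | h' <;> omega

/-- `11 + 2√7` is not a sum of three squares in `ℤ[√7]`. -/
lemma not_three_squares {a b : Fin 3 → ℤ} (h : ∑ i, a i ^ 2 + 7 * ∑ i, b i ^ 2 = 11)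
    (h' : ∑ i, a i * b i = 1) : False := by
  obtain ⟨ha, hb⟩ := one_le_sum_sq (f := a) (g := b) (by omega)
  have hb1 : ∑ i, b i ^ 2 = 1 := by omega
  obtain ⟨i, hi, hj⟩ := exists_of_sum_sq_eq_one hb1
  rw [Fin.sum_univ_succAbove _ i] at h'
  simp only [hj, mul_zero, Finset.sum_const_zero, add_zero] at h'
  have hai : a i ^ 2 = 1 := by
    have : (a i * b i) ^ 2 = 1 := by rw [h']; rfl
    rw [mul_pow, hi, mul_one] at this
    exact this
  have hA : ∑ i, a i ^ 2 = 4 := by omega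
  rw [Fin.sum_univ_succAbove _ i, Fin.sum_univ_two] at hA
  exact sq_add_sq_mod_four (a (i.succAbove 0)) (a (i.succAbove 1)) (by omega)

/-- The case `s ≡ 1 (mod 4)`: the coordinates of four squares with sum `α = 11 + 2√7 + w²`
cannot exist. By size, `√7√s` does not occur; then exactly one of the squares involves `√s`, it is
equal to `w²`, and the other three have sum `11 + 2√7`. -/
lemma no_rep_one {s : ℕ} (hs : s % 4 = 1) (h7 : 7 < s) {A B C D : Fin 4 → ℤ}
    (hAC : ∀ i, 2 ∣ A i - C i) (hBD : ∀ i, 2 ∣ B i - D i)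
    (e1 : ∑ i, A i ^ 2 + 7 * ∑ i, B i ^ 2 + s * ∑ i, C i ^ 2 + 7 * s * ∑ i, D i ^ 2 = 45 + s)
    (e2 : ∑ i, A i * B i + s * ∑ i, C i * D i = 4)
    (e3 : ∑ i, A i * C i + 7 * ∑ i, B i * D i = 1)
    (e4 : ∑ i, A i * D i + ∑ i, B i * C i = 0) : False := by
  have hA := sum_sq_nonneg A
  have hB := sum_sq_nonneg B
  have hC := sum_sq_nonneg C
  have hD := sum_sq_nonneg D
  have hsZ : (7 : ℤ) < s := by exact_mod_cast h7
  have hD0 : ∑ i, D i ^ 2 = 0 := by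
    have h4 : ∑ i, D i ^ 2 < 4 := by
      by_contra! h4
      nlinarith [mul_nonneg (by omega : (0 : ℤ) ≤ s) hC]
    have hBD' := sum_sq_le_of_parity hBD h4
    by_contra hne
    have : 1 ≤ ∑ i, D i ^ 2 := by omega
    nlinarith [mul_nonneg (by omega : (0 : ℤ) ≤ s) hC]
  have hDi := eq_zero_of_sum_sq hD0
  simp only [hDi, mul_zero, Finset.sum_const_zero, add_zero, zero_add, sub_zero] at e2 e3 e4 hBD
  choose b hb using hBD
  obtain rfl : B = fun i => 2 * b i := funext hb
  simp only [mul_pow, ← Finset.mul_sum, mul_left_comm _ (2 : ℤ), mul_assoc] at e1 e2 e4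
  rw [hD0] at e1
  have hCmod := dvd_sum_sq_sub hAC
  obtain ⟨hA1, hb1⟩ := one_le_sum_sq (f := A) (g := b) (by omega)
  obtain ⟨-, hC1⟩ := one_le_sum_sq (f := A) (g := C) (by omega)
  -- Modulo `4`, the sum of the `C i ^ 2` is odd, and `3` is too large.
  have hC1' : ∑ i, C i ^ 2 = 1 := by
    obtain ⟨k, hk⟩ : ∃ k : ℤ, (s : ℤ) = 4 * k + 1 := ⟨s / 4, by omega⟩
    have hodd : (∑ i, C i ^ 2) % 2 = 1 := by
      rw [hk, add_mul, mul_assoc] at e1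
      omega
    by_contra hne
    have : 3 ≤ ∑ i, C i ^ 2 := by omega
    have : (9 : ℤ) ≤ s := by omega
    nlinarith
  obtain ⟨i, hi, hj⟩ := exists_of_sum_sq_eq_one hC1'
  rw [hC1'] at e1
  rw [Fin.sum_univ_succAbove _ i] at e1 e2 e3 e4
  simp only [hj, mul_zero, Finset.sum_const_zero, add_zero] at e3 e4
  have hCi : C i ≠ 0 := by rintro h; simp [h] at hi
  have hbi : b i = 0 := by
    rcases mul_eq_zero.mp (show b i * C i = 0 by omega) with h | h
    · exact h
    · exact absurd h hCi
  have hAi : A i ^ 2 = 1 := by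
    have : (A i * C i) ^ 2 = 1 := by rw [e3]; rfl
    rwa [mul_pow, hi, mul_one] at this
  have hAj : ∀ j, 2 ∣ A (i.succAbove j) := fun j => by simpa [hj] using hAC (i.succAbove j)
  choose a ha using hAj
  rw [Fin.sum_univ_succAbove (fun i => b i ^ 2) i] at e1
  simp only [ha, hbi, hAi, mul_pow, ← Finset.mul_sum, mul_assoc, mul_zero, zero_add] at e1 e2
  refine not_three_squares (a := a) (b := fun j => b (i.succAbove j)) ?_ (by omega)
  simp at e1
  omega

/-- The case `s ≡ 2 (mod 4)`. The coordinates `a, b` of `1, √7` are integers, and `C, D` are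
twice the coordinates of `√s, √7√s`. Only for `s = 10` is it not a matter of size alone that
`√7√s` does not occur. -/
lemma no_rep_two {s : ℕ} (hs : s % 4 = 2) (h7 : 7 < s) {a b C D : Fin 4 → ℤ}
    (hCD : ∀ i, 2 ∣ C i - D i)
    (e1 : 4 * ∑ i, a i ^ 2 + 28 * ∑ i, b i ^ 2 + s * ∑ i, C i ^ 2 + 7 * s * ∑ i, D i ^ 2
      = 48 + 4 * s)
    (e2 : 4 * ∑ i, a i * b i + s * ∑ i, C i * D i = 4)
    (e3 : ∑ i, a i * C i + 7 * ∑ i, b i * D i = 2)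
    (e4 : ∑ i, a i * D i + ∑ i, b i * C i = 0) : False := by
  have ha := sum_sq_nonneg a
  have hb := sum_sq_nonneg b
  have hC := sum_sq_nonneg C
  have hD := sum_sq_nonneg D
  have hsZ : (7 : ℤ) < s := by exact_mod_cast h7
  have hD0 : ∑ i, D i ^ 2 = 0 := by
    have h4 : ∑ i, D i ^ 2 < 4 := by
      by_contra! h4
      nlinarith [mul_nonneg (by omega : (0 : ℤ) ≤ s) hC]
    have hCD' := sum_sq_le_of_parity hCD h4
    by_contra hne
    have hD1 : 1 ≤ ∑ i, D i ^ 2 := by omega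
    have hs10 : s = 10 := by
      have : (s : ℤ) ≤ 12 := by nlinarith
      omega
    subst hs10
    push_cast at e1 e2
    have hD1' : ∑ i, D i ^ 2 = 1 := by omega
    have hbi := eq_zero_of_sum_sq (f := b) (by omega)
    simp only [hbi, mul_zero, Finset.sum_const_zero, zero_add] at e2
    omega
  have hDi := eq_zero_of_sum_sq hD0
  simp only [hDi, mul_zero, Finset.sum_const_zero, add_zero, zero_add, sub_zero] at e2 e3 e4 hCD
  choose c hc using hCD
  obtain rfl : C = fun i => 2 * c i := funext hc
  simp only [mul_pow, ← Finset.mul_sum, mul_left_comm _ (2 : ℤ), mul_assoc] at e1 e3 e4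
  rw [hD0] at e1
  obtain ⟨ha1, hb1⟩ := one_le_sum_sq (f := a) (g := b) (by omega)
  obtain ⟨-, hc1⟩ := one_le_sum_sq (f := a) (g := c) (by omega)
  have hc1' : ∑ i, c i ^ 2 = 1 := by
    by_contra hne
    have : 2 ≤ ∑ i, c i ^ 2 := by omega
    nlinarith
  obtain ⟨i, hi, hj⟩ := exists_of_sum_sq_eq_one hc1'
  rw [hc1'] at e1
  rw [Fin.sum_univ_succAbove _ i] at e1 e2 e3 e4
  simp only [hj, mul_zero, Finset.sum_const_zero, add_zero] at e3 e4
  have hci : c i ≠ 0 := by rintro h; simp [h] at hi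
  have hbi : b i = 0 := by
    rcases mul_eq_zero.mp (show b i * c i = 0 by omega) with h | h
    · exact h
    · exact absurd h hci
  have hai : a i ^ 2 = 1 := by
    have : (a i * c i) ^ 2 = 1 := by rw [show a i * c i = 1 by omega]; rfl
    rwa [mul_pow, hi, mul_one] at this
  rw [Fin.sum_univ_succAbove (fun i => b i ^ 2) i] at e1
  simp only [hbi, hai, mul_zero, zero_add] at e1 e2
  refine not_three_squares (a := fun j => a (i.succAbove j)) (b := fun j => b (i.succAbove j))
    ?_ (by omega)
  simp at e1
  omega

/-- The case `s ≡ 3 (mod 4)`, `s ≠ 11`. -/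
lemma no_rep_three {s : ℕ} (hs : s % 4 = 3) (h7 : 7 < s) (h11 : s ≠ 11) {A B C D : Fin 4 → ℤ}
    (hAD : ∀ i, 2 ∣ A i - D i) (hBC : ∀ i, 2 ∣ B i - C i)
    (e1 : ∑ i, A i ^ 2 + 7 * ∑ i, B i ^ 2 + s * ∑ i, C i ^ 2 + 7 * s * ∑ i, D i ^ 2 = 51 + s)
    (e2 : ∑ i, A i * B i + s * ∑ i, C i * D i = 4)
    (e3 : ∑ i, A i * C i + 7 * ∑ i, B i * D i = 0)
    (e4 : ∑ i, A i * D i + ∑ i, B i * C i = 1) : False := by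
  have hA := sum_sq_nonneg A
  have hB := sum_sq_nonneg B
  have hC := sum_sq_nonneg C
  have hD := sum_sq_nonneg D
  have hsZ : (15 : ℤ) ≤ s := by omega
  have hD0 : ∑ i, D i ^ 2 = 0 := by
    by_contra hne
    have hD1 : 1 ≤ ∑ i, D i ^ 2 := by omega
    nlinarith [mul_nonneg (by omega : (0 : ℤ) ≤ s) hC]
  have hDi := eq_zero_of_sum_sq hD0
  simp only [hDi, mul_zero, Finset.sum_const_zero, add_zero, zero_add, sub_zero] at e2 e3 e4 hAD
  choose a ha using hAD
  obtain rfl : A = fun i => 2 * a i := funext ha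
  simp only [mul_pow, ← Finset.mul_sum, mul_assoc] at e1 e2 e3
  rw [hD0] at e1
  have hCmod := dvd_sum_sq_sub hBC
  obtain ⟨ha1, -⟩ := one_le_sum_sq (f := a) (g := B) (by omega)
  obtain ⟨hB1, hC1⟩ := one_le_sum_sq (f := B) (g := C) (by omega)
  -- Modulo `4`, the sum of the `C i ^ 2` is odd; if it is `3`, then that of the `B i ^ 2` is at
  -- least `3` by parity.
  have hC1' : ∑ i, C i ^ 2 = 1 := by
    obtain ⟨k, hk⟩ : ∃ k : ℤ, (s : ℤ) = 4 * k + 3 := ⟨s / 4, by omega⟩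
    have hodd : (∑ i, C i ^ 2) % 2 = 1 := by
      rw [hk, add_mul, mul_assoc] at e1
      omega
    by_contra hne
    by_cases h3 : ∑ i, C i ^ 2 = 3
    · have := sum_sq_le_of_parity hBC (by omega)
      rw [h3] at e1
      omega
    · have : 5 ≤ ∑ i, C i ^ 2 := by omega
      nlinarith
  obtain ⟨i, hi, hj⟩ := exists_of_sum_sq_eq_one hC1'
  rw [hC1'] at e1
  rw [Fin.sum_univ_succAbove _ i] at e1 e2 e3 e4
  simp only [hj, mul_zero, Finset.sum_const_zero, add_zero] at e3 e4
  have hCi : C i ≠ 0 := by rintro h; simp [h] at hi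
  have hai : a i = 0 := by
    rcases mul_eq_zero.mp (show a i * C i = 0 by omega) with h | h
    · exact h
    · exact absurd h hCi
  have hBi : B i ^ 2 = 1 := by
    have : (B i * C i) ^ 2 = 1 := by rw [e4]; rfl
    rwa [mul_pow, hi, mul_one] at this
  have hBj : ∀ j, 2 ∣ B (i.succAbove j) := fun j => by simpa [hj] using hBC (i.succAbove j)
  choose b hb using hBj
  rw [Fin.sum_univ_succAbove (fun i => B i ^ 2) i] at e1
  simp only [hb, hai, hBi, mul_pow, ← Finset.mul_sum, mul_left_comm _ (2 : ℤ), zero_mul,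
    zero_add] at e1 e2
  refine not_three_squares (a := fun j => a (i.succAbove j)) (b := b) ?_ (by omega)
  simp at e1
  omega

/-- The case `s = 11`, where `α = 13 + √7 + √11 + √7√11`. -/
lemma no_rep_eleven {A B C D : Fin 4 → ℤ}
    (hAD : ∀ i, 2 ∣ A i - D i) (hBC : ∀ i, 2 ∣ B i - C i)
    (e1 : ∑ i, A i ^ 2 + 7 * ∑ i, B i ^ 2 + 11 * ∑ i, C i ^ 2 + 77 * ∑ i, D i ^ 2 = 52)
    (e2 : ∑ i, A i * B i + 11 * ∑ i, C i * D i = 2)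
    (e4 : ∑ i, A i * D i + ∑ i, B i * C i = 2) : False := by
  have hA := sum_sq_nonneg A
  have hB := sum_sq_nonneg B
  have hC := sum_sq_nonneg C
  have hD := sum_sq_nonneg D
  have hD0 : ∑ i, D i ^ 2 = 0 := by omega
  have hDi := eq_zero_of_sum_sq hD0
  simp only [hDi, mul_zero, Finset.sum_const_zero, add_zero, zero_add, sub_zero] at e2 e4 hAD
  choose a ha using hAD
  obtain rfl : A = fun i => 2 * a i := funext ha
  simp only [mul_pow, ← Finset.mul_sum, mul_assoc] at e1 e2
  rw [hD0] at e1
  have hCmod := dvd_sum_sq_sub hBC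
  obtain ⟨ha1, -⟩ := one_le_sum_sq (f := a) (g := B) (by omega)
  obtain ⟨hB1, hC1⟩ := one_le_sum_sq (f := B) (g := C) (by omega)
  have hB2 : ∑ i, B i ^ 2 = 2 := by omega
  have hC2 : ∑ i, C i ^ 2 = 2 := by omega
  have ha4 : ∑ i, a i ^ 2 = 4 := by omega
  -- Two coordinates of `B` are `±1`, the others vanish.
  obtain ⟨i, hi⟩ : ∃ i, B i ≠ 0 := by
    by_contra! h0
    simp [h0] at hB2
  have hpos : 0 < B i ^ 2 := by positivity
  have hBi : B i ^ 2 = 1 := by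
    have hle := Finset.single_le_sum (f := fun i => B i ^ 2) (fun _ _ => sq_nonneg _)
      (Finset.mem_univ i)
    simp only [hB2] at hle
    rcases sq_mod_four (B i) with h | h <;> omega
  rw [Fin.sum_univ_succAbove _ i, hBi] at hB2
  obtain ⟨j, hj, hk⟩ := exists_of_sum_sq_eq_one (f := fun k => B (i.succAbove k))
    (show ∑ k, B (i.succAbove k) ^ 2 = 1 by omega)
  have e2' : ∑ i, a i * B i = 1 := by omega
  rw [Fin.sum_univ_succAbove _ i, Fin.sum_univ_succAbove _ j] at e2' ha4
  simp only [hk, mul_zero, Finset.sum_const_zero, add_zero] at e2'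
  rw [Fin.sum_univ_two] at ha4
  have := sq_add_sq_mod_four (a (i.succAbove (j.succAbove 0))) (a (i.succAbove (j.succAbove 1)))
  have p1 : (a i * B i) ^ 2 = a i ^ 2 := by rw [mul_pow, hBi, mul_one]
  have p2 : (a (i.succAbove j) * B (i.succAbove j)) ^ 2 = a (i.succAbove j) ^ 2 := by
    rw [mul_pow, hj, mul_one]
  rw [← p1, ← p2] at ha4
  rcases sq_mod_four (a i * B i) with h | h <;>
    rcases sq_mod_four (a (i.succAbove j) * B (i.succAbove j)) with h' | h' <;> omega

/-! ### Sums of squares in the ring of integers -/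

lemma indep_int {s : ℕ} (g : Good s) {a b c d a' b' c' d' : ℤ}
    (h : (a : ℝ) + b * √7 + c * √s + d * (√7 * √s) =
      a' + b' * √7 + c' * √s + d' * (√7 * √s)) :
    a = a' ∧ b = b' ∧ c = c' ∧ d = d' := by
  obtain ⟨h1, h2, h3, h4⟩ := indep g (a := a - a') (b := b - b') (c := c - c') (d := d - d')
    (by push_cast; linear_combination h)
  refine ⟨?_, ?_, ?_, ?_⟩ <;> (rw [← sub_eq_zero]; assumption_mod_cast)

/-- Four squares with sum `α`, written in the coordinates of twice their roots. -/
lemma exists_coords {s : ℕ} (g : Good s) {α : ℝ}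
    (h : SumOfNSquaresIn (ringOfInt (biqField 7 s)) 4 α) {p q r t : ℤ}
    (hα : 4 * α = p + q * √7 + r * √s + t * (√7 * √s)) :
    ∃ A B C D : Fin 4 → ℤ,
      (∀ i, 4 ∣ A i ^ 2 + 7 * B i ^ 2 - s * C i ^ 2 - 7 * s * D i ^ 2) ∧
      (∀ i, 2 ∣ A i * B i - s * (C i * D i)) ∧
      ∑ i, A i ^ 2 + 7 * ∑ i, B i ^ 2 + s * ∑ i, C i ^ 2 + 7 * s * ∑ i, D i ^ 2 = p ∧
      2 * (∑ i, A i * B i + s * ∑ i, C i * D i) = q ∧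
      2 * (∑ i, A i * C i + 7 * ∑ i, B i * D i) = r ∧
      2 * (∑ i, A i * D i + ∑ i, B i * C i) = t := by
  have hu : √7 ^ 2 = (7 : ℝ) := Real.sq_sqrt (by norm_num)
  have hv : √(s : ℝ) ^ 2 = s := Real.sq_sqrt (by positivity)
  obtain ⟨x, hx, hsum⟩ := h
  choose A B C D hrep h4 h2 using fun i => exists_int_rep g (hx i)
  refine ⟨A, B, C, D, h4, h2, indep_int g ?_⟩
  rw [← hα, hsum]
  have hsq : ∀ i, 4 * x i ^ 2 =
      ((A i : ℝ) ^ 2 + 7 * B i ^ 2 + s * C i ^ 2 + 7 * s * D i ^ 2)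
      + 2 * (A i * B i + s * (C i * D i)) * √7 + 2 * (A i * C i + 7 * (B i * D i)) * √s
      + 2 * (A i * D i + B i * C i) * (√7 * √s) := by
    intro i
    have : 4 * x i ^ 2 = (2 * x i) ^ 2 := by ring
    rw [this, hrep i]
    linear_combination ((B i : ℝ) + D i * √s) ^ 2 * hu + 2 * √7 * C i * D i * hv
      + ((C i : ℝ) ^ 2 + 7 * D i ^ 2) * hv
  simp only [Fin.sum_univ_four]
  push_cast
  linear_combination -hsq 0 - hsq 1 - hsq 2 - hsq 3

lemma mem_ringOfInt_of_sum {K : IntermediateField ℚ ℝ} {n : ℕ} {α : ℝ}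
    (h : SumOfNSquaresIn (ringOfInt K) n α) : α ∈ ringOfInt K := by
  obtain ⟨x, hx, rfl⟩ := h
  exact ⟨sum_mem fun i _ => pow_mem (hx i).1 2, IsIntegral.sum _ fun i _ => (hx i).2.pow 2⟩

lemma one_mem_ringOfInt (K : IntermediateField ℚ ℝ) : (1 : ℝ) ∈ ringOfInt K :=
  ⟨one_mem K, isIntegral_one⟩

lemma add_mem_ringOfInt {K : IntermediateField ℚ ℝ} {x y : ℝ} (hx : x ∈ ringOfInt K)
    (hy : y ∈ ringOfInt K) : x + y ∈ ringOfInt K :=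
  ⟨add_mem hx.1 hy.1, hx.2.add hy.2⟩

lemma isIntegral_sqrt (n : ℕ) : IsIntegral ℤ √(n : ℝ) := by
  refine IsIntegral.of_pow (n := 2) (by norm_num) ?_
  rw [Real.sq_sqrt (by positivity)]
  exact_mod_cast isIntegral_algebraMap (R := ℤ) (A := ℝ) (x := n)

lemma sqrt_seven_mem (s : ℕ) : √7 ∈ ringOfInt (biqField 7 s) := by
  have h := IntermediateField.subset_adjoin ℚ ({√(7 : ℕ), √(s : ℝ)} : Set ℝ) (Or.inl rfl)
  exact ⟨by unfold biqField; simpa using h, by simpa using isIntegral_sqrt 7⟩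

lemma sqrt_mem (s : ℕ) : √(s : ℝ) ∈ ringOfInt (biqField 7 s) :=
  ⟨IntermediateField.subset_adjoin ℚ ({√(7 : ℕ), √(s : ℝ)} : Set ℝ) (Or.inr rfl),
    isIntegral_sqrt s⟩

lemma half_mem {K : IntermediateField ℚ ℝ} {x : ℝ} (h : x ∈ K) : x / 2 ∈ K :=
  div_mem h (by exact_mod_cast natCast_mem K 2)

/-- A number with `x² = ux + k`, where `u` is integral and `k` an integer, is integral. -/
lemma isIntegral_of_quadratic {x u : ℝ} (hu : IsIntegral ℤ u) (k : ℤ) (h : x ^ 2 = u * x + k) :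
    IsIntegral ℤ x := by
  let R := integralClosure ℤ ℝ
  have hx : IsIntegral R x := by
    refine ⟨Polynomial.X ^ 2 - Polynomial.C ⟨u, hu⟩ * Polynomial.X - Polynomial.C (k : R), ?_, ?_⟩
    · monicity!
    · simp only [Polynomial.eval₂_sub, Polynomial.eval₂_mul, Polynomial.eval₂_pow,
        Polynomial.eval₂_X, Polynomial.eval₂_C]
      rw [h]
      show u * x + k - u * x - algebraMap R ℝ k = 0
      rw [map_intCast]
      ring
  exact isIntegral_trans (R := ℤ) (A := R) x hx

lemma half_one_add_mem {s : ℕ} (hs : s % 4 = 1) :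
    (1 + √(s : ℝ)) / 2 ∈ ringOfInt (biqField 7 s) := by
  have hv : √(s : ℝ) ^ 2 = s := Real.sq_sqrt (by positivity)
  refine ⟨half_mem (add_mem_ringOfInt (one_mem_ringOfInt _) (sqrt_mem s)).1,
    isIntegral_of_quadratic isIntegral_one ((s : ℤ) / 4) ?_⟩
  have hk : (s : ℤ) = 4 * ((s : ℤ) / 4) + 1 := by omega
  have hk' : (s : ℝ) = 4 * (((s : ℤ) / 4 : ℤ) : ℝ) + 1 := by exact_mod_cast hk
  linear_combination (1 / 4) * hv + (1 / 4) * hk'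

lemma half_sqrt_add_mem {s : ℕ} (hs : s % 4 = 3) :
    (√7 + √(s : ℝ)) / 2 ∈ ringOfInt (biqField 7 s) := by
  have hu : √7 ^ 2 = (7 : ℝ) := Real.sq_sqrt (by norm_num)
  have hv : √(s : ℝ) ^ 2 = s := Real.sq_sqrt (by positivity)
  refine ⟨half_mem (add_mem_ringOfInt (sqrt_seven_mem s) (sqrt_mem s)).1,
    isIntegral_of_quadratic (sqrt_seven_mem s).2 ((s : ℤ) / 4 - 1) ?_⟩
  have hk : (s : ℤ) = 4 * ((s : ℤ) / 4) + 3 := by omega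
  have hk' : (s : ℝ) = 4 * (((s : ℤ) / 4 : ℤ) : ℝ) + 3 := by exact_mod_cast hk
  push_cast at hk' ⊢
  linear_combination (1 / 4) * hv - (1 / 4) * hu + (1 / 4) * hk'

/-- The identity `11 + 2√7 = 1² + 1² + 1² + (1 + √7)²`. -/
lemma five_squares {s : ℕ} {w : ℝ} (hw : w ∈ ringOfInt (biqField 7 s)) :
    SumOfNSquaresIn (ringOfInt (biqField 7 s)) 5 (11 + 2 * √7 + w ^ 2) := by
  have hu : √7 ^ 2 = (7 : ℝ) := Real.sq_sqrt (by norm_num)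
  have h1 := one_mem_ringOfInt (biqField 7 s)
  refine ⟨![1, 1, 1, 1 + √7, w], ?_, ?_⟩
  · intro i
    fin_cases i
    exacts [h1, h1, h1, add_mem_ringOfInt h1 (sqrt_seven_mem s), hw]
  · simp [Fin.sum_univ_five]
    linear_combination -hu

lemma not_four_one {s : ℕ} (g : Good s) (h7 : 7 < s) (hs : s % 4 = 1) :
    ¬ SumOfNSquaresIn (ringOfInt (biqField 7 s)) 4 (11 + 2 * √7 + ((1 + √(s : ℝ)) / 2) ^ 2) := by
  intro h
  have hv : √(s : ℝ) ^ 2 = s := Real.sq_sqrt (by positivity)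
  obtain ⟨A, B, C, D, h4, h2, e1, e2, e3, e4⟩ :=
    exists_coords g h (p := 45 + s) (q := 8) (r := 2) (t := 0)
      (by push_cast; linear_combination hv)
  exact no_rep_one hs h7 (fun i => (parity_one hs (h4 i) (h2 i)).1)
    (fun i => (parity_one hs (h4 i) (h2 i)).2) e1 (by omega) (by omega) (by omega)

lemma not_four_two {s : ℕ} (g : Good s) (h7 : 7 < s) (hs : s % 4 = 2) :
    ¬ SumOfNSquaresIn (ringOfInt (biqField 7 s)) 4 (11 + 2 * √7 + (1 + √(s : ℝ)) ^ 2) := by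
  intro h
  have hv : √(s : ℝ) ^ 2 = s := Real.sq_sqrt (by positivity)
  obtain ⟨A, B, C, D, h4, h2, e1, e2, e3, e4⟩ :=
    exists_coords g h (p := 48 + 4 * s) (q := 8) (r := 8) (t := 0)
      (by push_cast; linear_combination 4 * hv)
  choose a ha using fun i => (parity_two hs (h4 i) (h2 i)).1
  choose b hb using fun i => (parity_two hs (h4 i) (h2 i)).2.1
  have hCD := fun i => (parity_two hs (h4 i) (h2 i)).2.2
  obtain rfl : A = fun i => 2 * a i := funext ha
  obtain rfl : B = fun i => 2 * b i := funext hb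
  simp only [mul_pow, ← Finset.mul_sum, mul_left_comm _ (2 : ℤ), mul_assoc] at e1 e2 e3 e4
  exact no_rep_two (a := a) (b := b) hs h7 hCD (by rw [mul_assoc]; omega)
    (by omega) (by omega) (by omega)

lemma not_four_three {s : ℕ} (g : Good s) (h7 : 7 < s) (h11 : s ≠ 11) (hs : s % 4 = 3) :
    ¬ SumOfNSquaresIn (ringOfInt (biqField 7 s)) 4 (11 + 2 * √7 + ((√7 + √(s : ℝ)) / 2) ^ 2) := by
  intro h
  have hu : √7 ^ 2 = (7 : ℝ) := Real.sq_sqrt (by norm_num)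
  have hv : √(s : ℝ) ^ 2 = s := Real.sq_sqrt (by positivity)
  obtain ⟨A, B, C, D, h4, h2, e1, e2, e3, e4⟩ :=
    exists_coords g h (p := 51 + s) (q := 8) (r := 0) (t := 2)
      (by push_cast; linear_combination hu + hv)
  exact no_rep_three hs h7 h11 (fun i => (parity_three hs (h4 i) (h2 i)).1)
    (fun i => (parity_three hs (h4 i) (h2 i)).2) e1 (by omega) (by omega) (by omega)

lemma eleven {s : ℕ} (g : Good s) (hs : s = 11) :
    SumOfNSquaresIn (ringOfInt (biqField 7 s)) 5
        (3 + ((√7 + √11) / 2) ^ 2 + (1 + (√7 + √11) / 2) ^ 2) ∧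
      ¬ SumOfNSquaresIn (ringOfInt (biqField 7 s)) 4
        (3 + ((√7 + √11) / 2) ^ 2 + (1 + (√7 + √11) / 2) ^ 2) := by
  have hs3 : s % 4 = 3 := by omega
  have hw := half_sqrt_add_mem hs3
  have hsR : (11 : ℝ) = (s : ℝ) := by rw [hs]; norm_num
  have h1 := one_mem_ringOfInt (biqField 7 s)
  have hu : √7 ^ 2 = (7 : ℝ) := Real.sq_sqrt (by norm_num)
  have hv : √(s : ℝ) ^ 2 = s := Real.sq_sqrt (by positivity)
  rw [show √11 = √(s : ℝ) by rw [hsR]]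
  constructor
  · refine ⟨![1, 1, 1, (√7 + √s) / 2, 1 + (√7 + √s) / 2], ?_, ?_⟩
    · intro i
      fin_cases i
      exacts [h1, h1, h1, hw, add_mem_ringOfInt h1 hw]
    · simp [Fin.sum_univ_five]
      ring
  · intro h
    obtain ⟨A, B, C, D, h4, h2, e1, e2, e3, e4⟩ :=
      exists_coords g h (p := 52) (q := 4) (r := 4) (t := 4)
        (by push_cast; linear_combination 2 * hu + 2 * hv - 2 * hsR)
    rw [hs] at e1 e2
    exact no_rep_eleven (fun i => (parity_three hs3 (h4 i) (h2 i)).1)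
      (fun i => (parity_three hs3 (h4 i) (h2 i)).2) (by push_cast at e1; omega)
      (by push_cast at e2; omega) (by omega)

lemma not_eleven {s : ℕ} (g : Good s) (h7 : 7 < s) (h11 : s ≠ 11) :
    SumOfNSquaresIn (ringOfInt (biqField 7 s)) 5
        (11 + 2 * √7 +
          (if s % 4 = 1 then (1 + √(s : ℝ)) / 2
           else if s % 4 = 2 then 1 + √(s : ℝ)
           else (√7 + √(s : ℝ)) / 2) ^ 2) ∧
      ¬ SumOfNSquaresIn (ringOfInt (biqField 7 s)) 4
        (11 + 2 * √7 +
          (if s % 4 = 1 then (1 + √(s : ℝ)) / 2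
           else if s % 4 = 2 then 1 + √(s : ℝ)
           else (√7 + √(s : ℝ)) / 2) ^ 2) := by
  have hs0 : s % 4 ≠ 0 := by
    intro h0
    have := g.sf 2 (by omega)
    rw [Nat.isUnit_iff] at this
    omega
  by_cases hs1 : s % 4 = 1
  · simp only [if_pos hs1]
    exact ⟨five_squares (half_one_add_mem hs1), not_four_one g h7 hs1⟩
  by_cases hs2 : s % 4 = 2
  · simp only [if_neg hs1, if_pos hs2]
    exact ⟨five_squares (add_mem_ringOfInt (one_mem_ringOfInt _) (sqrt_mem s)),
      not_four_two g h7 hs2⟩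
  · simp only [if_neg hs1, if_neg hs2]
    have hs3 : s % 4 = 3 := by omega
    exact ⟨five_squares (half_sqrt_add_mem hs3), not_four_three g h7 h11 hs3⟩

/-- Let `s > 7` be squarefree with `7 ∤ s` and `K = ℚ(√7, √s)`.
Then `P(O_K) ≥ 5`; for `s ≠ 11` the element `11 + 2√7 + w²` has length exactly `5`,
where `w` depends on `s mod 4` as indicated, and for `s = 11` the element
`3 + ((√7+√11)/2)² + (1+(√7+√11)/2)²` has length exactly `5`. -/
theorem pythagoras_sqrt7_ge_five
    (s : ℕ) (hs : Squarefree s) (hs7 : 7 < s) (hnd : ¬ (7 ∣ s)) :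
    (∃ α ∈ ringOfInt (biqField 7 s), IsSumOfSquaresIn (ringOfInt (biqField 7 s)) α ∧
      ¬ SumOfNSquaresIn (ringOfInt (biqField 7 s)) 4 α) ∧
    (s ≠ 11 →
      SumOfNSquaresIn (ringOfInt (biqField 7 s)) 5
        (11 + 2 * Real.sqrt 7 +
          (if s % 4 = 1 then (1 + Real.sqrt s) / 2
           else if s % 4 = 2 then 1 + Real.sqrt s
           else (Real.sqrt 7 + Real.sqrt s) / 2) ^ 2) ∧
      ¬ SumOfNSquaresIn (ringOfInt (biqField 7 s)) 4
        (11 + 2 * Real.sqrt 7 +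
          (if s % 4 = 1 then (1 + Real.sqrt s) / 2
           else if s % 4 = 2 then 1 + Real.sqrt s
           else (Real.sqrt 7 + Real.sqrt s) / 2) ^ 2)) ∧
    (s = 11 →
      SumOfNSquaresIn (ringOfInt (biqField 7 s)) 5
        (3 + ((Real.sqrt 7 + Real.sqrt 11) / 2) ^ 2 +
          (1 + (Real.sqrt 7 + Real.sqrt 11) / 2) ^ 2) ∧
      ¬ SumOfNSquaresIn (ringOfInt (biqField 7 s)) 4
        (3 + ((Real.sqrt 7 + Real.sqrt 11) / 2) ^ 2 +
          (1 + (Real.sqrt 7 + Real.sqrt 11) / 2) ^ 2)) := by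
  have g := Good.mk' hs hs7 hnd
  refine ⟨?_, not_eleven g hs7, eleven g⟩
  by_cases h11 : s = 11
  · obtain ⟨h5, h4⟩ := eleven g h11
    exact ⟨_, mem_ringOfInt_of_sum h5, ⟨5, h5⟩, h4⟩
  · obtain ⟨h5, h4⟩ := not_eleven g hs7 h11
    exact ⟨_, mem_ringOfInt_of_sum h5, ⟨5, h5⟩, h4⟩
end

section
/- Let s > 5 be a square-free integer with s ≡ 1 (mod 4) and 5 ∤ s, and let K = ℚ(√5, √s). Then the element α = 1² + 1² + ((1+√5)/2)² + ((1+√s)/2)² + ((−√5+√s)/2)² of O_K has length exactly 5 (it is a sum of 5 squares in O_K but not of 4); in particular the Pythagoras number of O_K is at least 5. -/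
/-! ### Rational arithmetic -/

/-- A squarefree natural number other than `1` is not the square of a rational. -/
lemma rat_sq_eq_mul_sq {n : ℕ} (hn : Squarefree n) (h1 : n ≠ 1) {r t : ℚ}
    (h : r ^ 2 = n * t ^ 2) : t = 0 := by
  by_contra ht
  have hsq : IsSquare (n : ℚ) := ⟨r / t, by field_simp; linarith⟩
  rw [Rat.isSquare_natCast_iff] at hsq
  obtain ⟨k, rfl⟩ := hsq
  have := hn k dvd_rfl
  simp_all

/-- If `n` is squarefree and `n b²` is an integer, then so is the rational `b`. -/
lemma rat_int_of_mul_sq {n : ℕ} (hn : Squarefree n) {b : ℚ} {k : ℤ}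
    (h : (n : ℚ) * b ^ 2 = k) : ∃ j : ℤ, b = j := by
  have hden : (b.den : ℚ) ≠ 0 := by exact_mod_cast b.den_ne_zero
  have h2 : (n : ℤ) * b.num ^ 2 = k * (b.den : ℤ) ^ 2 := by
    have hb : b * b.den = b.num := Rat.mul_den_eq_num b
    have : (n : ℚ) * (b.num : ℚ) ^ 2 = k * (b.den : ℚ) ^ 2 := by
      rw [← hb, ← h]; ring
    exact_mod_cast this
  have hcop : IsCoprime ((b.den : ℤ) ^ 2) (b.num ^ 2) := by
    apply IsCoprime.pow
    rw [Int.isCoprime_iff_gcd_eq_one]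
    have := b.reduced
    rw [Int.gcd_comm]
    simpa [Int.gcd, Nat.Coprime] using this
  have hdvd : ((b.den : ℤ) ^ 2) ∣ n := hcop.dvd_of_dvd_mul_right ⟨k, by rw [h2]; ring⟩
  have hdvd' : b.den * b.den ∣ n := by
    rw [← pow_two]; exact_mod_cast hdvd
  have h1 : b.den = 1 := by simpa using hn _ hdvd'
  exact ⟨b.num, ((Rat.den_eq_one_iff b).1 h1).symm⟩

lemma rat_int_of_isIntegral {q : ℚ} (h : IsIntegral ℤ (q : ℝ)) : ∃ k : ℤ, q = k := by
  have h' : IsIntegral ℤ q := by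
    have : IsIntegral ℤ (algebraMap ℚ ℝ q) := by simpa using h
    exact (isIntegral_algebraMap_iff (algebraMap ℚ ℝ).injective).1 this
  obtain ⟨k, hk⟩ := IsIntegrallyClosed.isIntegral_iff.1 h'
  exact ⟨k, by simpa using hk.symm⟩

/-! ### Coordinates with respect to `1, √5, √s, √(5s)` -/

lemma coeffs_zero_quad {N : ℕ} (hN : Squarefree N) (h1 : N ≠ 1) {y : ℝ} (hy : y ^ 2 = N)
    {E F : ℚ} (h : (E : ℝ) + F * y = 0) : E = 0 ∧ F = 0 := by
  have hE : E ^ 2 = N * F ^ 2 := by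
    have : (E : ℝ) ^ 2 = N * (F : ℝ) ^ 2 := by
      linear_combination (E - F * y) * h + (F : ℝ) ^ 2 * hy
    exact_mod_cast this
  have hF := rat_sq_eq_mul_sq hN h1 hE
  subst hF
  refine ⟨?_, rfl⟩
  simpa using h

/-- Linear independence of `1, √5, √s, √(5s)` over `ℚ`, for any choice of the signs. -/
lemma coeffs_zero {s : ℕ} (hs : Squarefree s) (h5s : Squarefree (5 * s)) (hs1 : s ≠ 1)
    {y z : ℝ} (hy : y ^ 2 = 5) (hz : z ^ 2 = s) {A B C D : ℚ}
    (h : (A : ℝ) + B * y + C * z + D * (y * z) = 0) : A = 0 ∧ B = 0 ∧ C = 0 ∧ D = 0 := by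
  have h5 : Squarefree (5 : ℕ) := Nat.prime_five.prime.squarefree
  -- the norm to `ℚ(√5)` vanishes
  have hn : ((A ^ 2 + 5 * B ^ 2 - s * (C ^ 2 + 5 * D ^ 2) : ℚ) : ℝ)
      + ((2 * (A * B - s * (C * D)) : ℚ) : ℝ) * y = 0 := by
    push_cast
    linear_combination (A + B * y - C * z - D * (y * z)) * h
      + (-(B : ℝ) ^ 2 + (D : ℝ) ^ 2 * s) * hy + (C + D * y) ^ 2 * hz
  obtain ⟨h1, h2⟩ := coeffs_zero_quad h5 (by norm_num) (by simpa using hy) hn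
  have h3 : (A ^ 2 - 5 * B ^ 2 - s * (C ^ 2 - 5 * D ^ 2)) *
      (A ^ 2 - 5 * B ^ 2 + s * (C ^ 2 - 5 * D ^ 2)) = 0 := by
    linear_combination (A ^ 2 + 5 * B ^ 2 + s * (C ^ 2 + 5 * D ^ 2)) * h1
      - 10 * (A * B + s * (C * D)) * h2
  have hs0 : (s : ℚ) ≠ 0 := by exact_mod_cast hs.ne_zero
  have h5s1 : 5 * s ≠ 1 := by omega
  rcases mul_eq_zero.1 h3 with h3 | h3
  · have hC : C = 0 := rat_sq_eq_mul_sq hs hs1 (r := A) (by linarith)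
    have hD : D = 0 := rat_sq_eq_mul_sq hs hs1 (r := B) (by linarith)
    subst hC hD
    refine ⟨?_, ?_, rfl, rfl⟩ <;> exact pow_eq_zero_iff (two_ne_zero) |>.1 (by linarith)
  · have hD : D = 0 := rat_sq_eq_mul_sq h5s h5s1 (r := A) (by push_cast; linarith)
    have hC : C = 0 := rat_sq_eq_mul_sq h5s h5s1 (r := 5 * B) (by push_cast; linarith)
    subst hC hD
    refine ⟨?_, ?_, rfl, rfl⟩ <;> exact pow_eq_zero_iff (two_ne_zero) |>.1 (by linarith)

/-- Evaluating a polynomial at `A + B y + C z + D y z` gives coordinates that depend only on the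
relations `y² = 5`, `z² = s`, not on the choice of the roots. -/
lemma eval_coords (s : ℕ) (A B C D : ℚ) (p : Polynomial ℤ) :
    ∃ A' B' C' D' : ℚ, ∀ y z : ℝ, y ^ 2 = 5 → z ^ 2 = s →
      Polynomial.aeval ((A : ℝ) + B * y + C * z + D * (y * z)) p
        = (A' : ℝ) + B' * y + C' * z + D' * (y * z) := by
  induction p using Polynomial.induction_on with
  | C n => exact ⟨n, 0, 0, 0, fun y z _ _ => by simp⟩
  | add p q hp hq =>
    obtain ⟨a, b, c, d, h⟩ := hp
    obtain ⟨a', b', c', d', h'⟩ := hq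
    refine ⟨a + a', b + b', c + c', d + d', fun y z hy hz => ?_⟩
    rw [map_add, h y z hy hz, h' y z hy hz]
    push_cast
    ring
  | monomial n m h =>
    obtain ⟨a, b, c, d, h⟩ := h
    refine ⟨a * A + 5 * (b * B) + s * (c * C) + 5 * s * (d * D),
      a * B + b * A + s * (c * D + d * C), a * C + c * A + 5 * (b * D + d * B),
      a * D + d * A + b * C + c * B, fun y z hy hz => ?_⟩
    rw [pow_succ, ← mul_assoc (Polynomial.C m), map_mul, h y z hy hz, Polynomial.aeval_X]
    push_cast
    linear_combination
      (b * B + (b * D + d * B) * z + d * D * z ^ 2 : ℝ) * hy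
      + (c * C + (c * D + d * C) * y + d * D * 5 : ℝ) * hz

/-- The conjugates of an integral element are integral. -/
lemma isIntegral_conj {s : ℕ} (hs : Squarefree s) (h5s : Squarefree (5 * s)) (hs1 : s ≠ 1)
    {y z y' z' : ℝ} (hy : y ^ 2 = 5) (hz : z ^ 2 = s) (hy' : y' ^ 2 = 5) (hz' : z' ^ 2 = s)
    {A B C D : ℚ} (h : IsIntegral ℤ ((A : ℝ) + B * y + C * z + D * (y * z))) :
    IsIntegral ℤ ((A : ℝ) + B * y' + C * z' + D * (y' * z')) := by
  obtain ⟨p, hp, h0⟩ := h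
  refine ⟨p, hp, ?_⟩
  obtain ⟨a, b, c, d, hh⟩ := eval_coords s A B C D p
  have e := hh y z hy hz
  rw [Polynomial.aeval_def, h0] at e
  obtain ⟨rfl, rfl, rfl, rfl⟩ := coeffs_zero hs h5s hs1 hy hz e.symm
  rw [← Polynomial.aeval_def, hh y' z' hy' hz']
  simp

lemma mem_biqField_coords {s : ℕ} {x : ℝ} (hx : x ∈ biqField 5 s) :
    ∃ A B C D : ℚ, x = (A : ℝ) + B * √5 + C * √s + D * (√5 * √s) := by
  have hy : √(5 : ℝ) ^ 2 = 5 := Real.sq_sqrt (by norm_num)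
  have hz : √(s : ℝ) ^ 2 = s := Real.sq_sqrt (by positivity)
  have halg : ∀ n : ℕ, IsAlgebraic ℚ (√(n : ℝ)) := fun n =>
    IsAlgebraic.of_pow two_pos (by
      rw [Real.sq_sqrt (by positivity)]
      exact isAlgebraic_natCast n)
  have hx' : x ∈ Algebra.adjoin ℚ {√((5 : ℕ) : ℝ), √(s : ℝ)} := by
    rw [← IntermediateField.adjoin_toSubalgebra_of_isAlgebraic]
    · exact hx
    · rintro w (rfl | rfl)
      exacts [halg 5, halg s]
  clear hx
  induction hx' using Algebra.adjoin_induction with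
  | mem w hw =>
    rcases hw with rfl | rfl
    · exact ⟨0, 1, 0, 0, by simp⟩
    · exact ⟨0, 0, 1, 0, by simp⟩
  | algebraMap r => exact ⟨r, 0, 0, 0, by simp⟩
  | add u v _ _ hu hv =>
    obtain ⟨a, b, c, d, rfl⟩ := hu
    obtain ⟨a', b', c', d', rfl⟩ := hv
    exact ⟨a + a', b + b', c + c', d + d', by push_cast; ring⟩
  | mul u v _ _ hu hv =>
    obtain ⟨a, b, c, d, rfl⟩ := hu
    obtain ⟨A, B, C, D, rfl⟩ := hv
    refine ⟨a * A + 5 * (b * B) + s * (c * C) + 5 * s * (d * D),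
      a * B + b * A + s * (c * D + d * C), a * C + c * A + 5 * (b * D + d * B),
      a * D + d * A + b * C + c * B, ?_⟩
    push_cast
    linear_combination
      (b * B + (b * D + d * B) * √s + d * D * √s ^ 2 : ℝ) * hy
      + (c * C + (c * D + d * C) * √5 + d * D * 5 : ℝ) * hz

/-! ### The ring of integers -/

/-- Integers of a quadratic field, in terms of an element and its conjugate. -/
lemma quad_coords {N : ℕ} (hN : Squarefree N) {y : ℝ} (hy : y ^ 2 = N) {E F : ℚ}
    (h1 : IsIntegral ℤ ((E : ℝ) + F * y)) (h2 : IsIntegral ℤ ((E : ℝ) - F * y)) :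
    ∃ m k n : ℤ, 2 * E = m ∧ 2 * F = k ∧ m ^ 2 - N * k ^ 2 = 4 * n := by
  obtain ⟨m, hm⟩ : ∃ m : ℤ, 2 * E = m := rat_int_of_isIntegral (isIntegral_of_eq (h1.add h2) (by push_cast; ring))
  obtain ⟨n, hn⟩ : ∃ n : ℤ, E ^ 2 - N * F ^ 2 = n := rat_int_of_isIntegral (isIntegral_of_eq (h1.mul h2) (by
    push_cast
    linear_combination (F : ℝ) ^ 2 * hy))
  obtain ⟨k, hk⟩ : ∃ k : ℤ, 2 * F = k := rat_int_of_mul_sq hN (k := m ^ 2 - 4 * n) (by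
    push_cast
    rw [← hm, ← hn]; ring)
  refine ⟨m, k, n, hm, hk, ?_⟩
  have : (m : ℚ) ^ 2 - N * (k : ℚ) ^ 2 = 4 * n := by
    rw [← hm, ← hk, ← hn]; ring
  exact_mod_cast this

lemma parity_of_norm {N m k n : ℤ} (hN : N % 4 = 1) (h : m ^ 2 - N * k ^ 2 = 4 * n) :
    m % 2 = k % 2 := by
  have hN2 : N % 2 = 1 := by omega
  have h2 : (m ^ 2 - N * k ^ 2) % 2 = 0 := by omega
  rcases Int.emod_two_eq_zero_or_one m with hm | hm <;>
    rcases Int.emod_two_eq_zero_or_one k with hk | hk <;>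
    simp [Int.sub_emod, Int.mul_emod, pow_two, hm, hk, hN2] at h2 ⊢

/-- Necessary conditions on the coordinates (scaled by `4`) of an algebraic integer of
`ℚ(√5, √s)`; the last three come from the relative norm to `ℚ(√5)`. -/
lemma integral_coords {s : ℕ} (hs : Squarefree s) (h5s : Squarefree (5 * s)) (hs1 : s ≠ 1)
    (hs4 : s % 4 = 1) {x : ℝ} (hx : x ∈ ringOfInt (biqField 5 s)) :
    ∃ a b c d m k : ℤ, 4 * x = (a : ℝ) + b * √5 + c * √s + d * (√5 * √s) ∧
      a % 2 = b % 2 ∧ a % 2 = c % 2 ∧ a % 2 = d % 2 ∧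
      a ^ 2 + 5 * b ^ 2 - s * (c ^ 2 + 5 * d ^ 2) = 8 * m ∧
      a * b - s * (c * d) = 4 * k ∧ m % 2 = k % 2 := by
  obtain ⟨hxK, hxi⟩ := hx
  obtain ⟨A, B, C, D, rfl⟩ := mem_biqField_coords hxK
  have h5 : Squarefree (5 : ℕ) := Nat.prime_five.prime.squarefree
  have hy : √(5 : ℝ) ^ 2 = 5 := Real.sq_sqrt (by norm_num)
  have hz : √(s : ℝ) ^ 2 = s := Real.sq_sqrt (by positivity)
  have hy' : (-√(5 : ℝ)) ^ 2 = 5 := by rw [neg_sq, hy]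
  have hz' : (-√(s : ℝ)) ^ 2 = s := by rw [neg_sq, hz]
  have c2 := isIntegral_conj hs h5s hs1 hy hz hy' hz hxi
  have c3 := isIntegral_conj hs h5s hs1 hy hz hy hz' hxi
  have c4 := isIntegral_conj hs h5s hs1 hy hz hy' hz' hxi
  generalize √(5 : ℝ) = y at *
  generalize √(s : ℝ) = z at *
  obtain ⟨a, b, n₁, ha, hb, e₁⟩ := quad_coords (E := 2 * A) (F := 2 * B) h5 (y := y)
    (by simpa using hy)
    (isIntegral_of_eq (hxi.add c3) (by push_cast; ring))
    (isIntegral_of_eq (c2.add c4) (by push_cast; ring))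
  obtain ⟨a', c, n₂, ha', hc, e₂⟩ := quad_coords (E := 2 * A) (F := 2 * C) hs hz
    (isIntegral_of_eq (hxi.add c2) (by push_cast; ring))
    (isIntegral_of_eq (c3.add c4) (by push_cast; ring))
  obtain ⟨a'', d, n₃, ha'', hd, e₃⟩ := quad_coords (E := 2 * A) (F := 2 * D) h5s (y := y * z)
    (by push_cast; rw [mul_pow, hy, hz])
    (isIntegral_of_eq (hxi.add c4) (by push_cast; ring))
    (isIntegral_of_eq (c2.add c3) (by push_cast; ring))
  obtain ⟨m, k, n, hm, hk, e⟩ := quad_coords (E := A ^ 2 + 5 * B ^ 2 - s * (C ^ 2 + 5 * D ^ 2))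
    (F := 2 * (A * B - s * (C * D))) h5 (y := y) (by simpa using hy)
    (isIntegral_of_eq (hxi.mul c3) (by
      push_cast
      linear_combination (-(B : ℝ) ^ 2 + (D : ℝ) ^ 2 * s) * hy + (C + D * y) ^ 2 * hz))
    (isIntegral_of_eq (c2.mul c4) (by
      push_cast
      linear_combination (-(B : ℝ) ^ 2 + (D : ℝ) ^ 2 * s) * hy + (C - D * y) ^ 2 * hz))
  obtain rfl : a = a' := by exact_mod_cast ha.symm.trans ha'
  obtain rfl : a = a'' := by exact_mod_cast ha.symm.trans ha''
  refine ⟨a, b, c, d, m, k, ?_, parity_of_norm (by norm_num) e₁, parity_of_norm (by omega) e₂,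
    parity_of_norm (by push_cast; omega) e₃, ?_, ?_, parity_of_norm (by norm_num) e⟩
  · have ha : (2 * (2 * A) : ℝ) = a := by exact_mod_cast ha
    have hb : (2 * (2 * B) : ℝ) = b := by exact_mod_cast hb
    have hc : (2 * (2 * C) : ℝ) = c := by exact_mod_cast hc
    have hd : (2 * (2 * D) : ℝ) = d := by exact_mod_cast hd
    rw [← ha, ← hb, ← hc, ← hd]; ring
  · have : (a : ℚ) ^ 2 + 5 * b ^ 2 - s * (c ^ 2 + 5 * d ^ 2) = 8 * m := by
      rw [← ha, ← hb, ← hc, ← hd, ← hm]; ring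
    exact_mod_cast this
  · have : (a : ℚ) * b - s * (c * d) = 4 * k := by
      rw [← ha, ← hb, ← hc, ← hd, ← hk]; ring
    exact_mod_cast this

/-! ### The integral system -/

/-- The heart of the matter, for `(c, d) = (2, 0), (2, 0), (0, 0), (0, 0)`; all variables have been
halved. -/
lemma no_solution_core {a₁ b₁ a₂ b₂ a₃ b₃ a₄ b₄ : ℤ}
    (p₁ : (a₁ + b₁) % 2 = 1) (p₃ : (a₃ + b₃) % 2 = 0) (p₄ : (a₄ + b₄) % 2 = 0)
    (ha : a₁ + a₂ = 1) (hb : b₁ + b₂ = -1)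
    (hP : a₁ ^ 2 + 5 * b₁ ^ 2 + (a₂ ^ 2 + 5 * b₂ ^ 2) + (a₃ ^ 2 + 5 * b₃ ^ 2)
      + (a₄ ^ 2 + 5 * b₄ ^ 2) = 20)
    (hQ : a₁ * b₁ + a₂ * b₂ + a₃ * b₃ + a₄ * b₄ = 1) : False := by
  obtain rfl : a₂ = 1 - a₁ := by omega
  obtain rfl : b₂ = -1 - b₁ := by omega
  have s1 := sq_nonneg a₁
  have s2 := sq_nonneg (1 - a₁)
  have s3 := sq_nonneg a₃
  have s4 := sq_nonneg a₄
  have t3 := sq_nonneg b₃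
  have t4 := sq_nonneg b₄
  have hb1 : -1 ≤ b₁ := by nlinarith
  have hb2 : b₁ ≤ 0 := by nlinarith
  have hP' : a₁ ^ 2 + (1 - a₁) ^ 2 + (a₃ ^ 2 + 5 * b₃ ^ 2) + (a₄ ^ 2 + 5 * b₄ ^ 2) = 15 := by
    have : b₁ = -1 ∨ b₁ = 0 := by omega
    rcases this with rfl | rfl <;> linarith
  have bd3 : ∀ x : ℤ, x ^ 2 ≤ 15 → -3 ≤ x ∧ x ≤ 3 := fun x h =>
    ⟨by nlinarith, by nlinarith⟩
  have bd1 : ∀ x : ℤ, x ^ 2 ≤ 3 → -1 ≤ x ∧ x ≤ 1 := fun x h =>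
    ⟨by nlinarith, by nlinarith⟩
  obtain ⟨ha1, ha1'⟩ := bd3 a₁ (by linarith)
  obtain ⟨ha3, ha3'⟩ := bd3 a₃ (by linarith)
  obtain ⟨ha4, ha4'⟩ := bd3 a₄ (by linarith)
  obtain ⟨hb3, hb3'⟩ := bd1 b₃ (by linarith)
  obtain ⟨hb4, hb4'⟩ := bd1 b₄ (by linarith)
  clear s1 s2 s3 s4 t3 t4 hP' bd3 bd1
  interval_cases b₁ <;> interval_cases a₁ <;> first | omega | skip
  all_goals
    interval_cases b₃ <;> interval_cases b₄ <;> first | omega | skip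
  all_goals
    interval_cases a₃ <;> first | omega | skip
  all_goals
    interval_cases a₄ <;> omega

/-- `no_solution_core` with `(c, d) = (2ε₁, 0), (2ε₂, 0), (0, 0), (0, 0)`, `εᵢ = ±1`. -/
lemma no_solution_signs {e₁ e₂ a₁ b₁ a₂ b₂ a₃ b₃ a₄ b₄ : ℤ}
    (he₁ : e₁ ^ 2 = 1) (he₂ : e₂ ^ 2 = 1)
    (p₁ : (a₁ + b₁) % 2 = 1) (p₃ : (a₃ + b₃) % 2 = 0) (p₄ : (a₄ + b₄) % 2 = 0)
    (ha : e₁ * a₁ + e₂ * a₂ = 1) (hb : e₁ * b₁ + e₂ * b₂ = -1)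
    (hP : a₁ ^ 2 + 5 * b₁ ^ 2 + (a₂ ^ 2 + 5 * b₂ ^ 2) + (a₃ ^ 2 + 5 * b₃ ^ 2)
      + (a₄ ^ 2 + 5 * b₄ ^ 2) = 20)
    (hQ : a₁ * b₁ + a₂ * b₂ + a₃ * b₃ + a₄ * b₄ = 1) : False := by
  refine no_solution_core (a₁ := e₁ * a₁) (b₁ := e₁ * b₁) (a₂ := e₂ * a₂) (b₂ := e₂ * b₂)
    (a₃ := a₃) (b₃ := b₃) (a₄ := a₄) (b₄ := b₄) ?_ p₃ p₄ ha hb ?_ ?_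
  · rcases sq_eq_one_iff.1 he₁ with rfl | rfl <;> omega
  · linear_combination hP + (a₁ ^ 2 + 5 * b₁ ^ 2) * he₁ + (a₂ ^ 2 + 5 * b₂ ^ 2) * he₂
  · linear_combination hQ + (a₁ * b₁) * he₁ + (a₂ * b₂) * he₂

/-- With `P = ∑ (a² + 5b²)`, `Q = ∑ ab`, `M = ∑ (c² + 5d²)`, `N = ∑ cd`: the element
`(M + 2N√5)/4` lies in `2ℤ[(1+√5)/2]` and is small, so it is `2`. -/
lemma reduce_to_two {s P Q M N m k : ℤ} (hs : 13 ≤ s) (hs4 : s % 4 = 1)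
    (h1 : P + s * M = 80 + 8 * s) (h2 : Q + s * N = 4) (h3 : P - s * M = 8 * m)
    (h4 : Q - s * N = 4 * k) (hmk : m % 2 = k % 2) (hM : 0 < M)
    (hN1 : 4 * N ≤ M) (hN2 : -(4 * N) ≤ M) (hQ1 : 4 * Q ≤ P) (hQ2 : -(4 * Q) ≤ P) :
    M = 8 ∧ N = 0 := by
  obtain ⟨t, rfl⟩ : ∃ t, s = 4 * t + 1 := ⟨s / 4, by omega⟩
  have hM15 : M < 15 := by
    by_contra! h
    nlinarith
  obtain ⟨e, rfl⟩ : ∃ e, M = 4 * e := ⟨10 + (4 * t + 1) - m - t * M, by linarith⟩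
  obtain ⟨f, rfl⟩ : ∃ f, N = 2 * f := ⟨1 - k - 2 * (t * N), by linarith⟩
  have hef : e % 2 = f % 2 := by
    have he : e + 4 * (t * e) = 10 + (4 * t + 1) - m := by linarith
    have hf : f + 4 * (t * f) = 1 - k := by linarith
    omega
  have he : e = 1 ∨ e = 2 ∨ e = 3 := by omega
  rcases he with rfl | rfl | rfl
  · omega
  · omega
  · have hf : f = 1 ∨ f = -1 := by omega
    rcases hf with rfl | rfl <;> omega

/-- Shape of the pairs `(c, d)` that can occur when `∑ (c² + 5d²) = 8`. -/
lemma small_pair_shape {c d : ℤ} (h : c ^ 2 + 5 * d ^ 2 ≤ 8) (hp : c % 2 = d % 2) :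
    (c ^ 2 + 5 * d ^ 2 = 6) ∨ (d = 0 ∧ (c = 0 ∨ c ^ 2 = 4)) := by
  have h1 : -1 ≤ d := by nlinarith [sq_nonneg c]
  have h2 : d ≤ 1 := by nlinarith [sq_nonneg c]
  have h3 : -2 ≤ c := by nlinarith [sq_nonneg d]
  have h4 : c ≤ 2 := by nlinarith [sq_nonneg d]
  interval_cases d <;> interval_cases c <;> omega

/-- `no_solution_signs` in the original, unhalved, coordinates. -/
lemma no_solution_pair {s c₁ c₂ a₁ b₁ a₂ b₂ a₃ b₃ a₄ b₄ m₁ m₃ m₄ : ℤ} (hs4 : s % 4 = 1)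
    (hc₁ : c₁ ^ 2 = 4) (hc₂ : c₂ ^ 2 = 4)
    (q₁ : a₁ % 2 = b₁ % 2 ∧ a₁ % 2 = c₁ % 2) (q₂ : a₂ % 2 = b₂ % 2 ∧ a₂ % 2 = c₂ % 2)
    (q₃ : a₃ % 2 = b₃ % 2 ∧ a₃ % 2 = 0) (q₄ : a₄ % 2 = b₄ % 2 ∧ a₄ % 2 = 0)
    (n₁ : a₁ ^ 2 + 5 * b₁ ^ 2 - s * 4 = 8 * m₁) (n₃ : a₃ ^ 2 + 5 * b₃ ^ 2 = 8 * m₃)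
    (n₄ : a₄ ^ 2 + 5 * b₄ ^ 2 = 8 * m₄)
    (ha : a₁ * c₁ + a₂ * c₂ = 4) (hb : b₁ * c₁ + b₂ * c₂ = -4)
    (hP : a₁ ^ 2 + 5 * b₁ ^ 2 + (a₂ ^ 2 + 5 * b₂ ^ 2) + (a₃ ^ 2 + 5 * b₃ ^ 2)
      + (a₄ ^ 2 + 5 * b₄ ^ 2) = 80)
    (hQ : a₁ * b₁ + a₂ * b₂ + a₃ * b₃ + a₄ * b₄ = 4) : False := by
  have even_of : ∀ {c : ℤ}, c ^ 2 = 4 → c % 2 = 0 := fun {c} hc => by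
    rcases sq_eq_sq_iff_eq_or_eq_neg.1 (hc.trans (by norm_num : (4 : ℤ) = 2 ^ 2)) with rfl | rfl <;>
      norm_num
  have k₁ := even_of hc₁
  have k₂ := even_of hc₂
  have half : ∀ c : ℤ, c % 2 = 0 → ∃ e, c = 2 * e := fun c h => ⟨c / 2, by omega⟩
  obtain ⟨e₁, rfl⟩ := half c₁ k₁
  obtain ⟨e₂, rfl⟩ := half c₂ k₂
  obtain ⟨a₁, rfl⟩ := half a₁ (by omega)
  obtain ⟨a₂, rfl⟩ := half a₂ (by omega)
  obtain ⟨a₃, rfl⟩ := half a₃ (by omega)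
  obtain ⟨a₄, rfl⟩ := half a₄ (by omega)
  obtain ⟨b₁, rfl⟩ := half b₁ (by omega)
  obtain ⟨b₂, rfl⟩ := half b₂ (by omega)
  obtain ⟨b₃, rfl⟩ := half b₃ (by omega)
  obtain ⟨b₄, rfl⟩ := half b₄ (by omega)
  have par : ∀ a b : ℤ, (a + b) % 2 = (a ^ 2 + 5 * b ^ 2) % 2 := fun a b => by
    rcases Int.emod_two_eq_zero_or_one a with h | h <;>
      rcases Int.emod_two_eq_zero_or_one b with h' | h' <;>
      simp [Int.add_emod, Int.mul_emod, pow_two, h, h']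
  have r₁ := par a₁ b₁
  have r₃ := par a₃ b₃
  have r₄ := par a₄ b₄
  ring_nf at n₁ n₃ n₄
  exact no_solution_signs (e₁ := e₁) (e₂ := e₂) (a₁ := a₁) (b₁ := b₁) (a₂ := a₂) (b₂ := b₂)
    (a₃ := a₃) (b₃ := b₃) (a₄ := a₄) (b₄ := b₄) (by linarith) (by linarith) (by omega) (by omega)
    (by omega) (by linarith) (by linarith) (by linarith) (by linarith)

lemma four_mul_le (x y : ℤ) : 4 * (x * y) ≤ x ^ 2 + 5 * y ^ 2 := by
  nlinarith [sq_nonneg (x - 2 * y), sq_nonneg y]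

lemma neg_four_mul_le (x y : ℤ) : -(4 * (x * y)) ≤ x ^ 2 + 5 * y ^ 2 := by
  nlinarith [sq_nonneg (x + 2 * y), sq_nonneg y]

lemma pair_eq_zero {x y : ℤ} (h : x ^ 2 + 5 * y ^ 2 ≤ 0) : x = 0 ∧ y = 0 := by
  constructor <;> exact pow_eq_zero_iff (two_ne_zero) |>.1 (by nlinarith [sq_nonneg x, sq_nonneg y])

/-- The system obtained from a representation of `α` as a sum of four squares is unsolvable. -/
lemma no_solution {s : ℤ} (hs : 13 ≤ s) (hs4 : s % 4 = 1) (a b c d m k : Fin 4 → ℤ)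
    (hab : ∀ i, a i % 2 = b i % 2) (hac : ∀ i, a i % 2 = c i % 2) (had : ∀ i, a i % 2 = d i % 2)
    (hm : ∀ i, a i ^ 2 + 5 * b i ^ 2 - s * (c i ^ 2 + 5 * d i ^ 2) = 8 * m i)
    (hk : ∀ i, a i * b i - s * (c i * d i) = 4 * k i) (hmk : ∀ i, m i % 2 = k i % 2)
    (h1 : ∑ i, (a i ^ 2 + 5 * b i ^ 2) + s * ∑ i, (c i ^ 2 + 5 * d i ^ 2) = 80 + 8 * s)
    (h2 : ∑ i, a i * b i + s * ∑ i, c i * d i = 4)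
    (h3 : ∑ i, (a i * c i + 5 * (b i * d i)) = 4)
    (h4 : ∑ i, (a i * d i + b i * c i) = -4) : False := by
  have hpos : 0 < ∑ i, (c i ^ 2 + 5 * d i ^ 2) := by
    have hnn : ∀ i ∈ Finset.univ, 0 ≤ c i ^ 2 + 5 * d i ^ 2 := fun i _ => by positivity
    rcases (Finset.sum_nonneg hnn).lt_or_eq with h | h
    · exact h
    · have h0 := (Finset.sum_eq_zero_iff_of_nonneg hnn).1 h.symm
      have h0' := fun i => pair_eq_zero (h0 i (Finset.mem_univ i)).le
      simp [h0'] at h3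
  obtain ⟨hM, hN⟩ := reduce_to_two (m := ∑ i, m i) (k := ∑ i, k i) hs hs4 h1 h2
    (by rw [Finset.mul_sum, ← Finset.sum_sub_distrib, Finset.mul_sum]
        exact Finset.sum_congr rfl fun i _ => hm i)
    (by rw [Finset.mul_sum, ← Finset.sum_sub_distrib, Finset.mul_sum]
        exact Finset.sum_congr rfl fun i _ => hk i)
    (by
      have := hmk 0; have := hmk 1; have := hmk 2; have := hmk 3
      simp only [Fin.sum_univ_four]; omega)
    hpos
    (by rw [Finset.mul_sum]; exact Finset.sum_le_sum fun i _ => four_mul_le _ _)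
    (by rw [Finset.mul_sum, ← Finset.sum_neg_distrib]
        exact Finset.sum_le_sum fun i _ => neg_four_mul_le _ _)
    (by rw [Finset.mul_sum]; exact Finset.sum_le_sum fun i _ => four_mul_le _ _)
    (by rw [Finset.mul_sum, ← Finset.sum_neg_distrib]
        exact Finset.sum_le_sum fun i _ => neg_four_mul_le _ _)
  rw [hM] at h1
  rw [hN] at h2
  have hle : ∀ i, c i ^ 2 + 5 * d i ^ 2 ≤ 8 := fun i => by
    rw [← hM]
    exact Finset.single_le_sum (f := fun i => c i ^ 2 + 5 * d i ^ 2)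
      (fun j _ => by positivity) (Finset.mem_univ i)
  have hsp := fun i => small_pair_shape (hle i) ((hac i).symm.trans (had i))
  -- a term equal to `6` would leave `2` for the others, which are each `0`, `4` or `6`
  have hd : ∀ i, d i = 0 ∧ (c i = 0 ∨ c i ^ 2 = 4) := by
    have hv : ∀ i, c i ^ 2 + 5 * d i ^ 2 = 6 ∨ c i ^ 2 + 5 * d i ^ 2 = 0 ∨
        c i ^ 2 + 5 * d i ^ 2 = 4 := fun i => by
      rcases hsp i with h | ⟨h, h' | h'⟩
      · exact Or.inl h
      · simp [h, h']
      · simp [h, h']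
    intro i
    refine (hsp i).resolve_left fun h6 => ?_
    rw [Fin.sum_univ_four] at hM
    have v0 := hv 0; have v1 := hv 1; have v2 := hv 2; have v3 := hv 3
    fin_cases i <;> simp only [Fin.zero_eta, Fin.mk_one, Fin.reduceFinMk] at h6 <;> omega
  have hd0 := fun i => (hd i).1
  have hc := fun i => (hd i).2
  simp only [Fin.sum_univ_four, hd0, mul_zero, add_zero, zero_add, ne_eq, OfNat.ofNat_ne_zero,
    not_false_eq_true, zero_pow] at h1 h2 h3 h4 hM hm
  have q := fun i => And.intro (hab i) (hac i)
  -- two of the four `c i` vanish; the core lemma is used with the other two in front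
  have key : ∀ i j l n : Fin 4, c i ^ 2 = 4 → c j ^ 2 = 4 → c l = 0 → c n = 0 →
      a i * c i + a j * c j = 4 → b i * c i + b j * c j = -4 →
      a i ^ 2 + 5 * b i ^ 2 + (a j ^ 2 + 5 * b j ^ 2) + (a l ^ 2 + 5 * b l ^ 2)
        + (a n ^ 2 + 5 * b n ^ 2) = 80 →
      a i * b i + a j * b j + a l * b l + a n * b n = 4 → False := by
    intro i j l n ci cj cl cn e1 e2 e3 e4
    have ql := q l
    have qn := q n
    have ml := hm l
    have mn := hm n
    have mi := hm i
    rw [cl] at ql ml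
    rw [cn] at qn mn
    rw [ci] at mi
    exact no_solution_pair hs4 ci cj (q i) (q j) (by simpa using ql) (by simpa using qn) mi
      (by simpa using ml) (by simpa using mn) e1 e2 e3 e4
  rcases hc 0 with c0 | c0 <;> rcases hc 1 with c1 | c1 <;> rcases hc 2 with c2 | c2 <;>
    rcases hc 3 with c3 | c3 <;> simp only [c0, c1, c2, c3] at hM <;>
    norm_num at hM <;> simp only [c0, c1, c2, c3, mul_zero, add_zero, zero_add] at h3 h4
  · exact key 2 3 0 1 c2 c3 c0 c1 h3 h4 (by linarith) (by linarith)
  · exact key 1 3 0 2 c1 c3 c0 c2 h3 h4 (by linarith) (by linarith)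
  · exact key 1 2 0 3 c1 c2 c0 c3 h3 h4 (by linarith) (by linarith)
  · exact key 0 3 1 2 c0 c3 c1 c2 h3 h4 (by linarith) (by linarith)
  · exact key 0 2 1 3 c0 c2 c1 c3 h3 h4 (by linarith) (by linarith)
  · exact key 0 1 2 3 c0 c1 c2 c3 h3 h4 (by linarith) (by linarith)

/-! ### The five squares are squares of integers -/

/-- `(1 + √n)/2` is a root of `X² - X - (n - 1)/4`. -/
lemma half_one_add_sqrt_isIntegral {n : ℕ} (hn : n % 4 = 1) :
    IsIntegral ℤ ((1 + √(n : ℝ)) / 2) := by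
  obtain ⟨t, rfl⟩ : ∃ t, n = 4 * t + 1 := ⟨n / 4, by omega⟩
  have hz : √((4 * t + 1 : ℕ) : ℝ) ^ 2 = (4 * t + 1 : ℕ) := Real.sq_sqrt (by positivity)
  refine ⟨Polynomial.X ^ 2 - Polynomial.X - Polynomial.C (t : ℤ), by monicity!, ?_⟩
  simp only [Polynomial.eval₂_sub, Polynomial.eval₂_pow, Polynomial.eval₂_X, Polynomial.eval₂_C]
  push_cast at hz ⊢
  linear_combination hz / 4

/-- Let `s > 5` be squarefree with `s ≡ 1 (mod 4)` and `5 ∤ s`, and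
`K = ℚ(√5, √s)`. Then `1² + 1² + ((1+√5)/2)² + ((1+√s)/2)² + ((−√5+√s)/2)²` is a sum of
`5` squares in `O_K` but not of `4`; in particular `P(O_K) ≥ 5`. -/
theorem length_five_element_sqrt5_s_one_mod_four
    (s : ℕ) (hs : Squarefree s) (hs5 : 5 < s) (hs4 : s % 4 = 1) (hnd : ¬ (5 ∣ s)) :
    SumOfNSquaresIn (ringOfInt (biqField 5 s)) 5
      (1 ^ 2 + 1 ^ 2 + ((1 + Real.sqrt 5) / 2) ^ 2 + ((1 + Real.sqrt s) / 2) ^ 2 +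
        ((-Real.sqrt 5 + Real.sqrt s) / 2) ^ 2) ∧
    ¬ SumOfNSquaresIn (ringOfInt (biqField 5 s)) 4
      (1 ^ 2 + 1 ^ 2 + ((1 + Real.sqrt 5) / 2) ^ 2 + ((1 + Real.sqrt s) / 2) ^ 2 +
        ((-Real.sqrt 5 + Real.sqrt s) / 2) ^ 2) := by
  constructor
  · have m5 : √(5 : ℝ) ∈ biqField 5 s :=
      IntermediateField.subset_adjoin ℚ _ (by simp)
    have ms : √(s : ℝ) ∈ biqField 5 s :=
      IntermediateField.subset_adjoin ℚ _ (by simp)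
    have m2 : (2 : ℝ) ∈ biqField 5 s := ofNat_mem _ 2
    have i5 : IsIntegral ℤ ((1 + √(5 : ℝ)) / 2) := by
      simpa using half_one_add_sqrt_isIntegral (n := 5) (by norm_num)
    have is := half_one_add_sqrt_isIntegral hs4
    have one : (1 : ℝ) ∈ ringOfInt (biqField 5 s) := ⟨one_mem _, isIntegral_one⟩
    refine ⟨![1, 1, (1 + √5) / 2, (1 + √s) / 2, (-√5 + √s) / 2], ?_, ?_⟩
    · intro i
      fin_cases i
      · exact one
      · exact one
      · exact ⟨div_mem (add_mem (one_mem _) m5) m2, i5⟩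
      · exact ⟨div_mem (add_mem (one_mem _) ms) m2, is⟩
      · refine ⟨div_mem (add_mem (neg_mem m5) ms) m2, ?_⟩
        exact isIntegral_of_eq (is.sub i5) (by simp; ring)
    · simp [Fin.sum_univ_five]
  · rintro ⟨x, hx, hsum⟩
    have hs9 : s ≠ 9 := by
      rintro rfl
      exact absurd (hs 3 ⟨1, by norm_num⟩) (by norm_num)
    have h5s : Squarefree (5 * s) :=
      (Nat.squarefree_mul ((Nat.Prime.coprime_iff_not_dvd Nat.prime_five).2 hnd)).2
        ⟨Nat.prime_five.prime.squarefree, hs⟩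
    choose a b c d m k hx4 hab hac had hm hk hmk using
      fun i => integral_coords hs h5s (by omega) hs4 (hx i)
    have hy : √(5 : ℝ) ^ 2 = 5 := Real.sq_sqrt (by norm_num)
    have hz : √(s : ℝ) ^ 2 = s := Real.sq_sqrt (by positivity)
    -- sixteen times the equation for `α`, coordinatewise
    have hcoord : (((∑ i, (a i ^ 2 + 5 * b i ^ 2) + s * ∑ i, (c i ^ 2 + 5 * d i ^ 2)
          - (80 + 8 * s) : ℤ) : ℚ) : ℝ)
        + ((2 * (∑ i, a i * b i + s * ∑ i, c i * d i - 4) : ℤ) : ℚ) * √5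
        + ((2 * (∑ i, (a i * c i + 5 * (b i * d i)) - 4) : ℤ) : ℚ) * √s
        + ((2 * (∑ i, (a i * d i + b i * c i) + 4) : ℤ) : ℚ) * (√5 * √s) = 0 := by
      have hx16 : ∀ i, 16 * x i ^ 2 =
          ((a i : ℝ) + b i * √5 + c i * √s + d i * (√5 * √s)) ^ 2 := fun i => by
        rw [← hx4 i]; ring
      have e0 := hx16 0
      have e1 := hx16 1
      have e2 := hx16 2
      have e3 := hx16 3
      simp only [Fin.sum_univ_four] at hsum ⊢
      push_cast
      generalize √(5 : ℝ) = y at *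
      generalize √(s : ℝ) = z at *
      linear_combination (-16) * hsum - e0 - e1 - e2 - e3
        - ((b 0 + d 0 * z) ^ 2 + (b 1 + d 1 * z) ^ 2 + (b 2 + d 2 * z) ^ 2
          + (b 3 + d 3 * z) ^ 2 - 8) * hy
        - (c 0 ^ 2 + c 1 ^ 2 + c 2 ^ 2 + c 3 ^ 2 + 5 * (d 0 ^ 2 + d 1 ^ 2 + d 2 ^ 2 + d 3 ^ 2)
          + 2 * y * (c 0 * d 0 + c 1 * d 1 + c 2 * d 2 + c 3 * d 3) - 8) * hz
    obtain ⟨r1, r2, r3, r4⟩ := coeffs_zero hs h5s (by omega) hy hz hcoord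
    norm_cast at r1 r2 r3 r4
    refine no_solution (s := s) (by omega) (by omega) a b c d m k hab hac had hm hk hmk
      ?_ ?_ ?_ ?_ <;> push_cast at r1 r2 r3 r4 <;> linarith
end
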